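/- arXiv:2106.12337 — 6 statements merged into one kernel-verified Lean document; each statement's English description precedes it below -/
import Mathlib

section
/- Let X be a real normed vector space, M ⊆ X a linear subspace, and Π : X → X a linear map. Then the following are equivalent: (i) there exists a constant C > 0 such that for every f ∈ X and every m ∈ M one has ‖Πf − m‖ + ‖f − Πf‖ ≤ C‖f − m‖; (ii) Π is invariant on M (Πm = m for all m ∈ M) and Π is stable (there exists C' > 0 with ‖Πg‖ ≤ C'‖g‖ for all g ∈ X). -/
/-!
The term `‖P f - m‖` carries all the information: at `f = m` its bound forces `P m = m`, and at
`m = 0` it is stability. Conversely, if `P m = m`, then `P f - m = P (f - m)`, so stability bounds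
this term with the same constant. The other term, `‖f - P f‖`, then costs only a triangle inequality
through `m`.
-/

section

variable {X F : Type*} [FunLike F X X] {P : F} {M : Set X} {C : ℝ}

theorem forall_norm_map_sub_le_iff [NormedAddCommGroup X] [AddMonoidHomClass F X X]
    (zero_mem : 0 ∈ M) :
    (∀ f, ∀ m ∈ M, ‖P f - m‖ ≤ C * ‖f - m‖) ↔
      (∀ m ∈ M, P m = m) ∧ ∀ g, ‖P g‖ ≤ C * ‖g‖ := by
  constructor
  · intro bound
    refine ⟨fun m hm => ?_, fun g => ?_⟩
    · simpa [sub_eq_zero] using bound m m hm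
    · simpa using bound g 0 zero_mem
  · rintro ⟨invariant, stable⟩ f m hm
    calc
      ‖P f - m‖ = ‖P (f - m)‖ := by rw [map_sub, invariant m hm]
      _ ≤ C * ‖f - m‖ := stable (f - m)

theorem norm_sub_add_norm_sub_le_of_norm_sub_le {E : Type*} [SeminormedAddCommGroup E]
    {f p m : E} (bound : ‖p - m‖ ≤ C * ‖f - m‖) :
    ‖p - m‖ + ‖f - p‖ ≤ (2 * C + 1) * ‖f - m‖ := by
  have triangle : ‖f - p‖ ≤ ‖f - m‖ + ‖p - m‖ := by
    simpa only [norm_sub_rev m p] using norm_sub_le_norm_sub_add_norm_sub f m p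
  linarith

theorem abstract_invariance_stability_iff_general [NormedAddCommGroup X]
    [AddMonoidHomClass F X X] (zero_mem : 0 ∈ M) :
    (∃ C : ℝ, 0 < C ∧ ∀ f, ∀ m ∈ M, ‖P f - m‖ + ‖f - P f‖ ≤ C * ‖f - m‖) ↔
      (∀ m ∈ M, P m = m) ∧ ∃ C' : ℝ, 0 < C' ∧ ∀ g, ‖P g‖ ≤ C' * ‖g‖ := by
  constructor
  · rintro ⟨C, C_pos, bound⟩
    obtain ⟨invariant, stable⟩ := (forall_norm_map_sub_le_iff zero_mem).mp fun f m hm =>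
      (le_add_of_nonneg_right (norm_nonneg (f - P f))).trans (bound f m hm)
    exact ⟨invariant, C, C_pos, stable⟩
  · rintro ⟨invariant, C, C_pos, stable⟩
    have bound := (forall_norm_map_sub_le_iff zero_mem).mpr ⟨invariant, stable⟩
    exact ⟨2 * C + 1, by positivity, fun f m hm =>
      norm_sub_add_norm_sub_le_of_norm_sub_le (bound f m hm)⟩

end

/-- abstract necessity and sufficiency of invariance and stability,
cf. Kreuzer–Veeser. For a linear map `P` on a normed space `X` and a subspace `M`,
the two-sided bound `‖Pf − m‖ + ‖f − Pf‖ ≤ C‖f − m‖` (for all `f` and `m ∈ M`)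
holds for some `C > 0` iff `P` is invariant on `M` and bounded (stable). -/
theorem abstract_invariance_stability_iff
    {X : Type*} [NormedAddCommGroup X] [NormedSpace ℝ X]
    (M : Submodule ℝ X) (P : X →ₗ[ℝ] X) :
    (∃ C : ℝ, 0 < C ∧ ∀ f : X, ∀ m ∈ M, ‖P f - m‖ + ‖f - P f‖ ≤ C * ‖f - m‖) ↔
      ((∀ m ∈ M, P m = m) ∧ ∃ C' : ℝ, 0 < C' ∧ ∀ g : X, ‖P g‖ ≤ C' * ‖g‖) :=
  abstract_invariance_stability_iff_general (M := (M : Set X)) M.zero_mem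
end

section
/- Let d ≥ 1, let Ω ⊆ ℝ^d be a bounded open set, κ > 0, and let (ω_i)_{i∈I} be a finite family of open subsets of Ω such that every point of Ω belongs to at most N of the sets ω_i. Let Λ : T(Ω) → ℝ be a linear functional with ‖Λ‖_{*,Ω} < ∞. Then Σ_{i∈I} ‖Λ‖_{*,ω_i}² ≤ N · ‖Λ‖_{*,Ω}². -/
open MeasureTheory Metric Set
open scoped ENNReal RealInnerProductSpace NNReal Classical

noncomputable section

abbrev Euc (d : ℕ) : Type := EuclideanSpace ℝ (Fin d)

/-- `T(ω)`: Lipschitz functions on `ℝ^d` vanishing identically outside `ω`. -/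
def IsTest {d : ℕ} (ω : Set (Euc d)) (φ : Euc d → ℝ) : Prop :=
  (∃ L : ℝ≥0, LipschitzWith L φ) ∧ ∀ x ∉ ω, φ x = 0

/-- `∫_ω |∇φ|²`. -/
def gradSq {d : ℕ} (ω : Set (Euc d)) (φ : Euc d → ℝ) : ℝ :=
  ∫ x in ω, ‖gradient φ x‖ ^ 2

/-- `∫_ω φ²`. -/
def sqIntg {d : ℕ} (ω : Set (Euc d)) (φ : Euc d → ℝ) : ℝ :=
  ∫ x in ω, (φ x) ^ 2

/-- squared energy norm `‖φ‖_{E,ω}² = ∫_ω |∇φ|² + κ² ∫_ω φ²`. -/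
def energySq {d : ℕ} (κ : ℝ) (ω : Set (Euc d)) (φ : Euc d → ℝ) : ℝ :=
  gradSq ω φ + κ ^ 2 * sqIntg ω φ

/-- local dual norm `‖Λ‖_{*,ω} = sup {Λφ : φ ∈ T(ω), ‖φ‖_{E,ω} ≤ 1}`. -/
def dualNorm {d : ℕ} (κ : ℝ) (ω : Set (Euc d)) (Λ : (Euc d → ℝ) → ℝ) : ℝ≥0∞ :=
  ⨆ φ ∈ {φ : Euc d → ℝ | IsTest ω φ ∧ energySq κ ω φ ≤ 1}, ENNReal.ofReal (Λ φ)

/-- inradius: supremum of radii of balls contained in `s`. -/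
def inradius {d : ℕ} (s : Set (Euc d)) : ℝ :=
  sSup {r : ℝ | ∃ c, Metric.ball c r ⊆ s}

/-- the simplex spanned by an affine basis. -/
def simT {d : ℕ} (B : AffineBasis (Fin (d+1)) ℝ (Euc d)) : Set (Euc d) :=
  convexHull ℝ (Set.range ⇑B)

/-- the face of the simplex opposite to the vertex `z`. -/
def simFace {d : ℕ} (B : AffineBasis (Fin (d+1)) ℝ (Euc d)) (z : Fin (d+1)) : Set (Euc d) :=
  convexHull ℝ (⇑B '' {y | y ≠ z})

/-- the standard `d`-simplex. -/
def Δstd (d : ℕ) : Set (Euc d) := {x | (∀ i, 0 ≤ x i) ∧ ∑ i, x i ≤ 1}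

/-- the element bubble of the standard simplex. -/
def elemBubble (d : ℕ) (x : Euc d) : ℝ := (1 - ∑ i, x i) * ∏ i, x i

/-! Choose near-optimal competitors `φᵢ` for `‖Λ‖_{*,ωᵢ}` and test `Λ` against
`ψ = ∑ᵢ (Λφᵢ)⁺ φᵢ`. By linearity `Λψ` is the sum `S` of the squares `((Λφᵢ)⁺)²`, while
Cauchy–Schwarz over the at most `N` functions active at a given point bounds the energy of `ψ` by
`N S`. Hence `S² ≤ N S ‖Λ‖_{*,Ω}²`, and cancelling `S` gives the claim. The energy of `φᵢ` is the
same on `ωᵢ`, on `Ω` and on the whole space, because the derivative of a real function vanishes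
almost everywhere on its zero set. -/

open scoped Finset

section General

theorem norm_sum_sq_le_card_mul_sum_norm_sq {ι V : Type*} [SeminormedAddCommGroup V]
    (s : Finset ι) (v : ι → V) :
    ‖∑ i ∈ s, v i‖ ^ 2 ≤ #{i ∈ s | v i ≠ 0} * ∑ i ∈ s, ‖v i‖ ^ 2 :=
  calc ‖∑ i ∈ s, v i‖ ^ 2 = ‖∑ i ∈ s with v i ≠ 0, v i‖ ^ 2 := by rw [Finset.sum_filter_ne_zero]
    _ ≤ (∑ i ∈ s with v i ≠ 0, ‖v i‖) ^ 2 := by gcongr; exact norm_sum_le _ _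
    _ ≤ #{i ∈ s | v i ≠ 0} * ∑ i ∈ s with v i ≠ 0, ‖v i‖ ^ 2 := sq_sum_le_card_mul_sum_sq
    _ ≤ #{i ∈ s | v i ≠ 0} * ∑ i ∈ s, ‖v i‖ ^ 2 := by
      gcongr
      exact Finset.filter_subset _ _

theorem sum_iSup_eq_iSup_pi_sum {ι : Type*} {α : ι → Type*} [∀ i, Nonempty (α i)]
    (s : Finset ι) (f : ∀ i, α i → ℝ≥0∞) :
    ∑ i ∈ s, ⨆ a, f i a = ⨆ g : ∀ i, α i, ∑ i ∈ s, f i (g i) := by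
  have iSup_eval (i : ι) : ⨆ a, f i a = ⨆ g : ∀ i, α i, f i (g i) :=
    ((Function.surjective_eval i).iSup_comp (f i)).symm
  simp_rw [iSup_eval]
  refine ENNReal.finsetSum_iSup fun g h ↦
    ⟨fun i ↦ if f i (g i) ≤ f i (h i) then h i else g i, fun i ↦ ?_⟩
  beta_reduce
  split_ifs with hgh
  · exact ⟨hgh, le_rfl⟩
  · exact ⟨le_rfl, (not_le.1 hgh).le⟩

theorem sum_ofReal_sq_eq_ofReal_sum_posPart_sq {ι : Type*} (s : Finset ι) (a : ι → ℝ) :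
    ∑ i ∈ s, ENNReal.ofReal (a i) ^ 2 = ENNReal.ofReal (∑ i ∈ s, (a i)⁺ ^ 2) := by
  rw [ENNReal.ofReal_sum_of_nonneg fun i _ ↦ sq_nonneg _]
  refine Finset.sum_congr rfl fun i _ ↦ ?_
  rw [ENNReal.ofReal_pow (posPart_nonneg _), posPart_def, ENNReal.ofReal_max, ENNReal.ofReal_zero,
    max_eq_left zero_le]

theorem norm_gradient_eq_norm_fderiv {F : Type*} [NormedAddCommGroup F] [InnerProductSpace ℝ F]
    [CompleteSpace F] (f : F → ℝ) (x : F) : ‖gradient f x‖ = ‖fderiv ℝ f x‖ :=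
  LinearIsometryEquiv.norm_map _ _

end General

section LevelSet

variable {E : Type*} [NormedAddCommGroup E] [NormedSpace ℝ E] [MeasurableSpace E] [BorelSpace E]

theorem measurableSet_differentiableAt_inter_preimage {F : Type*} [NormedAddCommGroup F]
    [NormedSpace ℝ F] [CompleteSpace F] (f : E → F) {t : Set F} (ht : IsClosed t) :
    MeasurableSet ({x | DifferentiableAt ℝ f x} ∩ f ⁻¹' t) := by
  have hf : ContinuousOn f {x | DifferentiableAt ℝ f x} :=
    fun x hx ↦ hx.continuousAt.continuousWithinAt
  obtain ⟨u, hu, hfu⟩ := continuousOn_iff_isClosed.1 hf t ht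
  rw [inter_comm, hfu]
  exact hu.measurableSet.inter (measurableSet_of_differentiableAt ℝ f)

/- `ApproximatesLinearOn.norm_fderiv_sub_le` is about maps `E → E`, so it is applied to
`x ↦ f x • e` with a fixed `e ≠ 0`. Where `f` is not differentiable, `fderiv ℝ f x` is `0` by
convention. -/
theorem ae_fderiv_eq_zero_of_apply_eq [FiniteDimensional ℝ E] (μ : Measure E) [μ.IsAddHaarMeasure]
    (f : E → ℝ) (c : ℝ) : ∀ᵐ x ∂μ, f x = c → fderiv ℝ f x = 0 := by
  rcases subsingleton_or_nontrivial E with _ | _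
  · exact .of_forall fun _ _ ↦ Subsingleton.elim _ _
  obtain ⟨e, he⟩ := exists_ne (0 : E)
  set s : Set E := {x | DifferentiableAt ℝ f x} ∩ f ⁻¹' {c}
  have hs : MeasurableSet s := measurableSet_differentiableAt_inter_preimage f isClosed_singleton
  have const_on_s : ApproximatesLinearOn (fun x ↦ f x • e) (0 : E →L[ℝ] E) s 0 := by
    rintro x ⟨-, rfl⟩ y ⟨-, hy⟩
    simp [mem_singleton_iff.1 hy]
  have deriv_zero := const_on_s.norm_fderiv_sub_le μ hs (fun x ↦ (fderiv ℝ f x).smulRight e)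
    fun x hx ↦ (hx.1.hasFDerivAt.smul_const e).hasFDerivWithinAt
  filter_upwards [(ae_restrict_iff' hs).1 deriv_zero] with x hx hfx
  by_cases hdiff : DifferentiableAt ℝ f x
  · simpa [he] using hx ⟨hdiff, hfx⟩
  · exact fderiv_zero_of_not_differentiableAt hdiff

end LevelSet

section EnergyDensity

variable {E : Type*} [NormedAddCommGroup E] [NormedSpace ℝ E]

/-- The integrand `|∇φ|² + κ² φ²` of the squared energy norm, written with the operator norm of the
derivative so that it makes sense on any normed space. -/
def energyDensity (κ : ℝ) (φ : E → ℝ) (x : E) : ℝ :=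
  ‖fderiv ℝ φ x‖ ^ 2 + κ ^ 2 * φ x ^ 2

theorem energyDensity_nonneg (κ : ℝ) (φ : E → ℝ) (x : E) : 0 ≤ energyDensity κ φ x := by
  unfold energyDensity
  positivity

theorem ae_energyDensity_sum_le [MeasurableSpace E] [BorelSpace E] [FiniteDimensional ℝ E]
    (μ : Measure E) [μ.IsAddHaarMeasure] (κ : ℝ) {ι : Type*} (s : Finset ι) (φ : ι → E → ℝ)
    (hφ : ∀ i ∈ s, ∀ᵐ x ∂μ, DifferentiableAt ℝ (φ i) x) :
    ∀ᵐ x ∂μ, energyDensity κ (∑ i ∈ s, φ i) x ≤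
      #{i ∈ s | φ i x ≠ 0} * ∑ i ∈ s, energyDensity κ (φ i) x := by
  have fderiv_zero : ∀ᵐ x ∂μ, ∀ i ∈ s, φ i x = 0 → fderiv ℝ (φ i) x = 0 :=
    (Finset.eventually_all s).2 fun i _ ↦ ae_fderiv_eq_zero_of_apply_eq μ (φ i) 0
  filter_upwards [fderiv_zero, (Finset.eventually_all s).2 hφ] with x hzero hdiff
  have active_le : #{i ∈ s | fderiv ℝ (φ i) x ≠ 0} ≤ #{i ∈ s | φ i x ≠ 0} := by
    gcongr with i hi
    exact hzero i hi
  have grad_le : ‖fderiv ℝ (∑ i ∈ s, φ i) x‖ ^ 2 ≤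
      #{i ∈ s | φ i x ≠ 0} * ∑ i ∈ s, ‖fderiv ℝ (φ i) x‖ ^ 2 := by
    rw [fderiv_sum hdiff]
    refine (norm_sum_sq_le_card_mul_sum_norm_sq s _).trans ?_
    gcongr
  have value_le : (∑ i ∈ s, φ i) x ^ 2 ≤ #{i ∈ s | φ i x ≠ 0} * ∑ i ∈ s, φ i x ^ 2 := by
    simpa using norm_sum_sq_le_card_mul_sum_norm_sq s (φ · x)
  calc energyDensity κ (∑ i ∈ s, φ i) x
      ≤ #{i ∈ s | φ i x ≠ 0} * ∑ i ∈ s, ‖fderiv ℝ (φ i) x‖ ^ 2 +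
        κ ^ 2 * (#{i ∈ s | φ i x ≠ 0} * ∑ i ∈ s, φ i x ^ 2) := by
        unfold energyDensity; gcongr
    _ = #{i ∈ s | φ i x ≠ 0} * ∑ i ∈ s, energyDensity κ (φ i) x := by
        simp only [energyDensity, Finset.sum_add_distrib, ← Finset.mul_sum]
        ring

end EnergyDensity

section Test

variable {d : ℕ} {ω Ω : Set (Euc d)} {φ : Euc d → ℝ}

theorem energySq_smul (κ : ℝ) (ω : Set (Euc d)) (c : ℝ) (φ : Euc d → ℝ) :
    energySq κ ω (c • φ) = c ^ 2 * energySq κ ω φ := by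
  simp only [energySq, gradSq, sqIntg, norm_gradient_eq_norm_fderiv, fderiv_const_smul_field,
    Pi.smul_apply, norm_smul, smul_eq_mul, mul_pow, Real.norm_eq_abs, sq_abs, integral_const_mul]
  ring

namespace IsTest

theorem mono (hφ : IsTest ω φ) (h : ω ⊆ Ω) : IsTest Ω φ :=
  ⟨hφ.1, fun x hx ↦ hφ.2 x fun hxω ↦ hx (h hxω)⟩

theorem hasCompactSupport (hφ : IsTest ω φ) (hω : Bornology.IsBounded ω) : HasCompactSupport φ :=
  .intro hω.isCompact_closure fun x hx ↦ hφ.2 x fun hxω ↦ hx (subset_closure hxω)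

theorem integrable_sq (hφ : IsTest ω φ) (hω : Bornology.IsBounded ω) :
    Integrable fun x ↦ φ x ^ 2 := by
  obtain ⟨L, hL⟩ := hφ.1
  exact (hL.continuous.pow 2).integrable_of_hasCompactSupport
    ((hφ.hasCompactSupport hω).comp_left (zero_pow two_ne_zero))

theorem integrable_norm_fderiv_sq (hφ : IsTest ω φ) (hω : Bornology.IsBounded ω) :
    Integrable fun x ↦ ‖fderiv ℝ φ x‖ ^ 2 := by
  obtain ⟨L, hL⟩ := hφ.1
  have on_support : IntegrableOn (fun x ↦ ‖fderiv ℝ φ x‖ ^ 2) (tsupport φ) := by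
    refine Measure.integrableOn_of_bounded (M := (L : ℝ) ^ 2)
      (hφ.hasCompactSupport hω).isCompact.measure_lt_top.ne
      ((measurable_fderiv ℝ φ).norm.pow_const 2).aestronglyMeasurable (.of_forall fun x ↦ ?_)
    rw [Real.norm_of_nonneg (by positivity)]
    gcongr
    exact norm_fderiv_le_of_lipschitz ℝ hL
  refine on_support.integrable_of_forall_notMem_eq_zero fun x hx ↦ ?_
  simp [fderiv_of_notMem_tsupport ℝ hx]

theorem integrable_energyDensity (κ : ℝ) (hφ : IsTest ω φ) (hω : Bornology.IsBounded ω) :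
    Integrable (energyDensity κ φ) :=
  (hφ.integrable_norm_fderiv_sq hω).add ((hφ.integrable_sq hω).const_mul _)

theorem gradSq_eq_integral (hφ : IsTest ω φ) : gradSq ω φ = ∫ x, ‖fderiv ℝ φ x‖ ^ 2 := by
  simp_rw [gradSq, norm_gradient_eq_norm_fderiv]
  refine setIntegral_eq_integral_of_ae_compl_eq_zero ?_
  filter_upwards [ae_fderiv_eq_zero_of_apply_eq volume φ 0] with x hx hxω
  simp [hx (hφ.2 x hxω)]

theorem sqIntg_eq_integral (hφ : IsTest ω φ) : sqIntg ω φ = ∫ x, φ x ^ 2 :=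
  setIntegral_eq_integral_of_forall_compl_eq_zero fun x hx ↦ by simp [hφ.2 x hx]

theorem energySq_eq_integral (κ : ℝ) (hφ : IsTest ω φ) (hω : Bornology.IsBounded ω) :
    energySq κ ω φ = ∫ x, energyDensity κ φ x := by
  simp_rw [energySq, hφ.gradSq_eq_integral, hφ.sqIntg_eq_integral, energyDensity]
  rw [integral_add (hφ.integrable_norm_fderiv_sq hω) ((hφ.integrable_sq hω).const_mul _),
    integral_const_mul]

theorem energySq_eq_of_subset (κ : ℝ) (hφ : IsTest ω φ) (h : ω ⊆ Ω) :
    energySq κ Ω φ = energySq κ ω φ := by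
  simp_rw [energySq, (hφ.mono h).gradSq_eq_integral, (hφ.mono h).sqIntg_eq_integral,
    hφ.gradSq_eq_integral, hφ.sqIntg_eq_integral]

end IsTest

/-- The space `T(Ω)` of test functions, as a subspace of all functions. -/
def testSpace (Ω : Set (Euc d)) : Submodule ℝ (Euc d → ℝ) where
  carrier := {φ | IsTest Ω φ}
  add_mem' := by
    rintro φ ψ ⟨⟨L, hL⟩, hφ⟩ ⟨⟨M, hM⟩, hψ⟩
    exact ⟨⟨L + M, hL.add hM⟩, fun x hx ↦ by simp [hφ x hx, hψ x hx]⟩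
  zero_mem' := ⟨⟨0, LipschitzWith.const 0⟩, fun _ _ ↦ rfl⟩
  smul_mem' := by
    rintro c φ ⟨⟨L, hL⟩, hφ⟩
    exact ⟨⟨‖c‖₊ * L, (lipschitzWith_smul c).comp hL⟩, fun x hx ↦ by simp [hφ x hx]⟩

theorem energySq_sum_le (κ : ℝ) (hΩ : Bornology.IsBounded Ω) {ι : Type*} {s : Finset ι}
    {φ : ι → Euc d → ℝ} (hφ : ∀ i ∈ s, IsTest Ω (φ i)) {N : ℕ}
    (hN : ∀ x, #{i ∈ s | φ i x ≠ 0} ≤ N) :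
    energySq κ Ω (∑ i ∈ s, φ i) ≤ N * ∑ i ∈ s, energySq κ Ω (φ i) := by
  have sum_test : IsTest Ω (∑ i ∈ s, φ i) := (testSpace Ω).sum_mem hφ
  have integrable_density : ∀ i ∈ s, Integrable (energyDensity κ (φ i)) :=
    fun i hi ↦ (hφ i hi).integrable_energyDensity κ hΩ
  have density_le : ∀ᵐ x, energyDensity κ (∑ i ∈ s, φ i) x ≤
      N * ∑ i ∈ s, energyDensity κ (φ i) x := by
    have ae_diff : ∀ i ∈ s, ∀ᵐ x, DifferentiableAt ℝ (φ i) x := fun i hi ↦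
      let ⟨_, hL⟩ := (hφ i hi).1
      hL.ae_differentiableAt
    filter_upwards [ae_energyDensity_sum_le volume κ s φ ae_diff] with x hx
    refine hx.trans ?_
    gcongr
    · exact Finset.sum_nonneg fun i _ ↦ energyDensity_nonneg κ (φ i) x
    · exact hN x
  calc energySq κ Ω (∑ i ∈ s, φ i)
      = ∫ x, energyDensity κ (∑ i ∈ s, φ i) x := sum_test.energySq_eq_integral κ hΩ
    _ ≤ ∫ x, N * ∑ i ∈ s, energyDensity κ (φ i) x :=
        integral_mono_ae (sum_test.integrable_energyDensity κ hΩ)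
          ((integrable_finsetSum s integrable_density).const_mul _) density_le
    _ = N * ∑ i ∈ s, energySq κ Ω (φ i) := by
        rw [integral_const_mul, integral_finsetSum s integrable_density,
          Finset.sum_congr rfl fun i hi ↦ ((hφ i hi).energySq_eq_integral κ hΩ).symm]

theorem energySq_sum_smul_le {κ : ℝ} (hΩ : Bornology.IsBounded Ω) {ι : Type*} {s : Finset ι}
    {φ : ι → Euc d → ℝ} (hφ : ∀ i ∈ s, IsTest Ω (φ i)) (hφ_le : ∀ i ∈ s, energySq κ Ω (φ i) ≤ 1)
    {N : ℕ} (hN : ∀ x, #{i ∈ s | φ i x ≠ 0} ≤ N) (a : ι → ℝ) :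
    energySq κ Ω (∑ i ∈ s, a i • φ i) ≤ N * ∑ i ∈ s, a i ^ 2 := by
  have smul_test : ∀ i ∈ s, IsTest Ω (a i • φ i) :=
    fun i hi ↦ (testSpace Ω).smul_mem (a i) (hφ i hi)
  have overlap (x : Euc d) : #{i ∈ s | (a i • φ i) x ≠ 0} ≤ N :=
    (Finset.card_le_card <| Finset.monotone_filter_right s fun _ _ ↦ right_ne_zero_of_mul).trans
      (hN x)
  refine (energySq_sum_le κ hΩ smul_test overlap).trans ?_
  gcongr with i hi
  rw [energySq_smul]
  exact mul_le_of_le_one_right (sq_nonneg _) (hφ_le i hi)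

end Test

section DualNorm

variable {d : ℕ} {Ω : Set (Euc d)} {Λ : (Euc d → ℝ) → ℝ}

/-- The competitors in the supremum defining the dual norm: the unit ball of `T(ω)` for the energy
norm. -/
def energyBall (κ : ℝ) (ω : Set (Euc d)) : Set (Euc d → ℝ) :=
  {φ | IsTest ω φ ∧ energySq κ ω φ ≤ 1}

theorem zero_mem_energyBall (κ : ℝ) (ω : Set (Euc d)) : (0 : Euc d → ℝ) ∈ energyBall κ ω := by
  refine ⟨(testSpace ω).zero_mem, ?_⟩
  have energy_zero : energySq κ ω 0 = 0 := by simpa using energySq_smul κ ω 0 0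
  exact energy_zero.trans_le zero_le_one

theorem dualNorm_sq_eq_iSup (κ : ℝ) (ω : Set (Euc d)) (Λ : (Euc d → ℝ) → ℝ) :
    dualNorm κ ω Λ ^ 2 = ⨆ φ : energyBall κ ω, ENNReal.ofReal (Λ φ) ^ 2 := by
  have dualNorm_eq : dualNorm κ ω Λ = ⨆ φ : energyBall κ ω, ENNReal.ofReal (Λ φ) := iSup_subtype'
  rw [dualNorm_eq]
  exact Monotone.map_iSup_of_continuousAt (ENNReal.continuous_pow 2).continuousAt (pow_left_mono 2)
    (zero_pow two_ne_zero)

theorem ofReal_sq_le_mul_dualNorm_sq {κ t : ℝ} (hΛ : IsLinearMap ℝ fun φ : testSpace Ω ↦ Λ φ)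
    (φ : testSpace Ω) (ht : 0 < t) (hφ : energySq κ Ω φ ≤ t) :
    ENNReal.ofReal (Λ φ) ^ 2 ≤ ENNReal.ofReal t * dualNorm κ Ω Λ ^ 2 := by
  have normalized_mem : ((√t)⁻¹ • φ : Euc d → ℝ) ∈ energyBall κ Ω := by
    refine ⟨((√t)⁻¹ • φ).2, ?_⟩
    rw [energySq_smul, inv_pow, Real.sq_sqrt ht.le]
    exact (inv_mul_le_one₀ ht).2 hφ
  have rescale : Λ φ = √t * Λ ((√t)⁻¹ • φ) := by
    rw [show Λ ((√t)⁻¹ • φ) = (√t)⁻¹ * Λ φ from hΛ.map_smul _ φ,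
      mul_inv_cancel_left₀ (Real.sqrt_ne_zero'.2 ht)]
  calc ENNReal.ofReal (Λ φ) ^ 2
      = ENNReal.ofReal t * ENNReal.ofReal (Λ ((√t)⁻¹ • φ)) ^ 2 := by
        rw [rescale, ENNReal.ofReal_mul (Real.sqrt_nonneg t), mul_pow,
          ← ENNReal.ofReal_pow (Real.sqrt_nonneg t), Real.sq_sqrt ht.le]
    _ ≤ ENNReal.ofReal t * dualNorm κ Ω Λ ^ 2 := by
        gcongr
        exact le_iSup₂ (f := fun φ (_ : φ ∈ energyBall κ Ω) ↦ ENNReal.ofReal (Λ φ)) _ normalized_mem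

theorem sum_ofReal_sq_le_mul_dualNorm_sq {κ : ℝ} (hΩ : Bornology.IsBounded Ω)
    (hΛ : IsLinearMap ℝ fun φ : testSpace Ω ↦ Λ φ) {ι : Type*} (s : Finset ι)
    (φ : ι → testSpace Ω) (hφ : ∀ i ∈ s, energySq κ Ω (φ i) ≤ 1) {N : ℕ}
    (hN : ∀ x, #{i ∈ s | (φ i : Euc d → ℝ) x ≠ 0} ≤ N) :
    ∑ i ∈ s, ENNReal.ofReal (Λ (φ i)) ^ 2 ≤ N * dualNorm κ Ω Λ ^ 2 := by
  rw [sum_ofReal_sq_eq_ofReal_sum_posPart_sq]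
  set S : ℝ := ∑ i ∈ s, (Λ (φ i))⁺ ^ 2
  rcases le_or_gt S 0 with hS | hS
  · exact (ENNReal.ofReal_of_nonpos hS).trans_le zero_le
  have hN_pos : 0 < N := by
    obtain ⟨i, hi, hΛi⟩ := Finset.exists_ne_zero_of_sum_ne_zero hS.ne'
    have φi_ne : (φ i : Euc d → ℝ) ≠ 0 := fun h ↦ hΛi <| by
      simp [show φ i = 0 from Subtype.ext h, show Λ 0 = 0 from hΛ.map_zero]
    obtain ⟨x, hx⟩ := Function.ne_iff.1 φi_ne
    exact (Finset.card_pos.2 ⟨i, Finset.mem_filter.2 ⟨hi, hx⟩⟩).trans_le (hN x)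
  let ψ : testSpace Ω := ∑ i ∈ s, (Λ (φ i))⁺ • φ i
  have Λψ_eq : Λ ψ = S :=
    calc Λ ψ = ∑ i ∈ s, (Λ (φ i))⁺ * Λ (φ i) := by
          rw [← hΛ.mk'_apply, map_sum]
          exact Finset.sum_congr rfl fun i _ ↦ hΛ.map_smul _ (φ i)
      _ = S := Finset.sum_congr rfl fun i _ ↦ by
          rcases le_total (Λ (φ i)) 0 with h | h <;> simp [h, sq]
  have energy_le : energySq κ Ω ψ ≤ N * S := by
    rw [Submodule.coe_sum]
    exact energySq_sum_smul_le hΩ (fun i _ ↦ (φ i).2) hφ hN _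
  have sq_le : ENNReal.ofReal S * ENNReal.ofReal S ≤
      ENNReal.ofReal S * (N * dualNorm κ Ω Λ ^ 2) := by
    calc _ = ENNReal.ofReal (Λ ψ) ^ 2 := by rw [Λψ_eq, sq]
      _ ≤ ENNReal.ofReal (N * S) * dualNorm κ Ω Λ ^ 2 :=
        ofReal_sq_le_mul_dualNorm_sq hΛ ψ (by positivity) energy_le
      _ = _ := by
        rw [ENNReal.ofReal_mul N.cast_nonneg, ENNReal.ofReal_natCast]
        ring
  exact (ENNReal.mul_le_mul_iff_right (ENNReal.ofReal_pos.2 hS).ne' ENNReal.ofReal_ne_top).1 sq_le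

end DualNorm

theorem localization_sum_le_global_general {d : ℕ} (κ : ℝ) {Ω : Set (Euc d)}
    (hΩ : Bornology.IsBounded Ω) {ι : Type*} (ω : ι → Set (Euc d)) (hω : ∀ i, ω i ⊆ Ω)
    (N : ℕ) (hN : ∀ x ∈ Ω, {i | x ∈ ω i}.encard ≤ N) (Λ : (Euc d → ℝ) → ℝ)
    (hΛ : IsLinearMap ℝ fun φ : testSpace Ω ↦ Λ φ) :
    ∑' i, dualNorm κ (ω i) Λ ^ 2 ≤ N * dualNorm κ Ω Λ ^ 2 := by
  have (i : ι) : Nonempty (energyBall κ (ω i)) := ⟨⟨0, zero_mem_energyBall κ (ω i)⟩⟩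
  simp_rw [dualNorm_sq_eq_iSup κ (ω _), ENNReal.tsum_eq_iSup_sum, sum_iSup_eq_iSup_pi_sum]
  refine iSup₂_le fun s φ ↦ ?_
  have overlap_le (x : Euc d) : {i | x ∈ ω i}.encard ≤ N := by
    by_cases hx : x ∈ Ω
    · exact hN x hx
    · simp [show {i | x ∈ ω i} = ∅ from eq_empty_of_forall_notMem fun i hi ↦ hx (hω i hi)]
  have active_le (x : Euc d) : #{i ∈ s | (φ i : Euc d → ℝ) x ≠ 0} ≤ N := by
    rw [← Nat.cast_le (α := ℕ∞), ← Set.encard_coe_eq_coe_finsetCard]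
    refine (Set.encard_le_encard fun i hi ↦ ?_).trans (overlap_le x)
    exact of_not_not fun hx ↦ (Finset.mem_filter.1 hi).2 ((φ i).2.1.2 x hx)
  exact sum_ofReal_sq_le_mul_dualNorm_sq hΩ hΛ s (fun i ↦ ⟨φ i, (φ i).2.1.mono (hω i)⟩)
    (fun i _ ↦ ((φ i).2.1.energySq_eq_of_subset κ (hω i)).trans_le (φ i).2.2) active_le

/-- localization of the dual energy norm, upper bound by the global norm.
For a finite family of open subsets `ω i ⊆ Ω` with overlap at most `N` and a linear
functional `Λ` with finite global dual norm,
`Σᵢ ‖Λ‖_{*,ωᵢ}² ≤ N ‖Λ‖_{*,Ω}²`. -/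
theorem localization_sum_le_global
    (d : ℕ) (hd : 1 ≤ d) (κ : ℝ) (hκ : 0 < κ)
    (Ω : Set (Euc d)) (hΩ : IsOpen Ω) (hbdd : Bornology.IsBounded Ω)
    {I : Type*} [Fintype I] (ω : I → Set (Euc d))
    (hopen : ∀ i, IsOpen (ω i)) (hsub : ∀ i, ω i ⊆ Ω)
    (N : ℕ) (hover : ∀ x ∈ Ω, Nat.card {i : I // x ∈ ω i} ≤ N)
    (Λ : (Euc d → ℝ) → ℝ)
    (hadd : ∀ φ ψ : Euc d → ℝ, Λ (φ + ψ) = Λ φ + Λ ψ)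
    (hsmul : ∀ (c : ℝ) (φ : Euc d → ℝ), Λ (c • φ) = c * Λ φ)
    (hfin : dualNorm κ Ω Λ ≠ ⊤) :
    ∑ i : I, (dualNorm κ (ω i) Λ) ^ 2 ≤ (N : ℝ≥0∞) * (dualNorm κ Ω Λ) ^ 2 := by
  rw [← tsum_fintype (L := .unconditional I)]
  refine localization_sum_le_global_general κ hbdd ω hsub N (fun x hx ↦ ?_) Λ
    ⟨fun φ ψ ↦ hadd φ ψ, fun c φ ↦ hsmul c φ⟩
  exact (Set.toFinite _).cast_ncard_eq.symm.trans_le (Nat.cast_le.2 (hover x hx))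
end
end

section
/- Let d ≥ 1 and let Δ = {x ∈ ℝ^d : x_i ≥ 0 for all i, Σ_i x_i ≤ 1} be the standard d-simplex with barycentric coordinates λ₀(x) = 1 − Σ_i x_i, λ_i(x) = x_i, and element bubble b(x) = Π_{i=0}^d λ_i(x). There exists a constant c > 0, depending only on d, such that for every affine function v : ℝ^d → ℝ one has ∫_Δ v² ≤ c ∫_Δ b v². -/
open MeasureTheory Metric Set
open scoped ENNReal RealInnerProductSpace NNReal Classical

noncomputable section

/-!
An affine function `v` can be recovered at `x` from its values after one and two applications of
the homothety `h` of ratio `r ≠ 0` centred at a point `w`: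
`r v(x) = (1 + r) v(h x) - v(h² x)`. Squaring and changing variables bounds the `L²` norm of `v`
over `S` by its `L²` norm over `h(S) ⊆ S`, uniformly in `v`. If `S` is a convex body, `w` an
interior point and `r = 1/2`, then `h(S)` is a compact subset of the interior of `S`, where a
weight such as the element bubble is bounded away from zero.
-/

open AffineMap Filter Module Topology
open scoped Pointwise

section Extrapolation

lemma smul_affineMap_eq_homothety_combination {k V P F : Type*} [CommRing k]
    [AddCommGroup V] [Module k V] [AddTorsor V P] [AddCommGroup F] [Module k F]
    (v : P →ᵃ[k] F) (w x : P) (r : k) :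
    r • v x = (1 + r) • v (homothety w r x) - v (homothety w r (homothety w r x)) := by
  simp only [homothety_eq_lineMap, apply_lineMap, lineMap_apply_module]
  module

lemma sq_mul_norm_sq_affineMap_le {V P F : Type*} [AddCommGroup V] [Module ℝ V] [AddTorsor V P]
    [SeminormedAddCommGroup F] [NormedSpace ℝ F] (v : P →ᵃ[ℝ] F) (w x : P) (r : ℝ) :
    r ^ 2 * ‖v x‖ ^ 2 ≤ 2 * (1 + r) ^ 2 * ‖v (homothety w r x)‖ ^ 2
      + 2 * ‖v (homothety w r (homothety w r x))‖ ^ 2 := by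
  set y := homothety w r x
  have htriangle : ‖r • v x‖ ≤ ‖(1 + r) • v y‖ + ‖v (homothety w r y)‖ := by
    rw [smul_affineMap_eq_homothety_combination v w x r]
    exact norm_sub_le _ _
  calc r ^ 2 * ‖v x‖ ^ 2 = ‖r • v x‖ ^ 2 := by
        rw [norm_smul, mul_pow, Real.norm_eq_abs, sq_abs]
    _ ≤ (‖(1 + r) • v y‖ + ‖v (homothety w r y)‖) ^ 2 := by gcongr
    _ ≤ 2 * (‖(1 + r) • v y‖ ^ 2 + ‖v (homothety w r y)‖ ^ 2) := add_sq_le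
    _ = 2 * (1 + r) ^ 2 * ‖v y‖ ^ 2 + 2 * ‖v (homothety w r y)‖ ^ 2 := by
        rw [norm_smul, mul_pow, Real.norm_eq_abs, sq_abs]
        ring

end Extrapolation

section ConvexBody

variable {E : Type*} [AddCommGroup E] [Module ℝ E] [TopologicalSpace E] [IsTopologicalAddGroup E]
  {S : Set E}

lemma image_homothety_subset_interior [ContinuousConstSMul ℝ E] (hconv : Convex ℝ S) {w : E}
    (hw : w ∈ interior S) {r : ℝ} (hr₀ : 0 ≤ r) (hr₁ : r < 1) :
    homothety w r '' S ⊆ interior S := by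
  rintro _ ⟨x, hx, rfl⟩
  rw [homothety_eq_lineMap, lineMap_apply_module]
  exact hconv.combo_interior_self_mem_interior hw hx (sub_pos.2 hr₁) hr₀ (sub_add_cancel 1 r)

lemma nonneg_on_of_pos_on_interior [ContinuousSMul ℝ E] (hS : IsClosed S) (hconv : Convex ℝ S)
    (hne : (interior S).Nonempty) {b : E → ℝ} (hb : ContinuousOn b S)
    (hpos : ∀ x ∈ interior S, 0 < b x) : ∀ x ∈ S, 0 ≤ b x := by
  have hclosure : closure (interior S) = S :=
    (hconv.closure_interior_eq_closure_of_nonempty_interior hne).trans hS.closure_eq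
  intro x hx
  rw [← hclosure] at hx hb
  exact le_on_closure (fun y hy ↦ (hpos y hy).le) continuousOn_const hb hx

end ConvexBody

section Integral

lemma mul_setIntegral_le_setIntegral_mul {X : Type*} [MeasurableSpace X] {ν : Measure X}
    {K T : Set X} (hKT : K ⊆ T) (hK : MeasurableSet K) (hT : MeasurableSet T) {b f : X → ℝ} {β : ℝ}
    (hβ : ∀ x ∈ K, β ≤ b x) (hb : ∀ x ∈ T, 0 ≤ b x) (hf : ∀ x ∈ T, 0 ≤ f x)
    (hfint : IntegrableOn f K ν) (hbfint : IntegrableOn (fun x ↦ b x * f x) T ν) :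
    β * ∫ x in K, f x ∂ν ≤ ∫ x in T, b x * f x ∂ν :=
  calc β * ∫ x in K, f x ∂ν = ∫ x in K, β * f x ∂ν := (integral_const_mul _ _).symm
    _ ≤ ∫ x in K, b x * f x ∂ν :=
        setIntegral_mono_on (hfint.const_mul β) (hbfint.mono_set hKT) hK
          fun x hx ↦ mul_le_mul_of_nonneg_right (hβ x hx) (hf x (hKT hx))
    _ ≤ ∫ x in T, b x * f x ∂ν :=
        setIntegral_mono_set hbfint
          (ae_restrict_of_forall_mem hT fun x hx ↦ mul_nonneg (hb x hx) (hf x hx))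
          hKT.eventuallyLE

variable {E F : Type*} [NormedAddCommGroup E] [NormedSpace ℝ E] [FiniteDimensional ℝ E]
  [MeasurableSpace E] [BorelSpace E] (μ : Measure E) [μ.IsAddHaarMeasure]
  [NormedAddCommGroup F] [NormedSpace ℝ F]

lemma setIntegral_comp_homothety (f : E → F) (S : Set E) (w : E) {r : ℝ} (hr : r ≠ 0) :
    ∫ x in S, f (homothety w r x) ∂μ
      = |(r ^ finrank ℝ E)⁻¹| • ∫ x in homothety w r '' S, f x ∂μ := by
  have hhomothety : ⇑(homothety w r) = fun x ↦ r • x + (1 - r) • w := by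
    ext x
    rw [homothety_eq_lineMap, lineMap_apply_module, add_comm]
  have himage : homothety w r '' S = (· + (1 - r) • w) '' (r • S) := by
    rw [hhomothety, ← image_smul, image_image]
  rw [himage, (measurePreserving_add_right μ _).setIntegral_image_emb
    (measurableEmbedding_addRight _), hhomothety]
  exact Measure.setIntegral_comp_smul μ (fun y ↦ f (y + (1 - r) • w)) S hr

variable {S : Set E}

lemma sq_mul_setIntegral_norm_sq_affineMap_le_image_homothety (hS : IsCompact S) {w : E} {r : ℝ}
    (hr : r ≠ 0) (hmaps : MapsTo (homothety w r) S S) (v : E →ᵃ[ℝ] F) :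
    r ^ 2 * ∫ x in S, ‖v x‖ ^ 2 ∂μ
      ≤ (2 * (1 + r) ^ 2 + 2 * |(r ^ finrank ℝ E)⁻¹|) * |(r ^ finrank ℝ E)⁻¹|
        * ∫ x in homothety w r '' S, ‖v x‖ ^ 2 ∂μ := by
  set h : E →ᵃ[ℝ] E := homothety w r
  set J : ℝ := |(r ^ finrank ℝ E)⁻¹|
  have hv : Continuous v := v.continuous_of_finiteDimensional
  have hh : Continuous h := h.continuous_of_finiteDimensional
  have hint {g : E → ℝ} (hg : Continuous g) : IntegrableOn g S μ :=
    hg.continuousOn.integrableOn_compact hS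
  have hint_h : IntegrableOn (fun x ↦ ‖v (h x)‖ ^ 2) S μ := hint (by fun_prop)
  have hint_hh : IntegrableOn (fun x ↦ ‖v (h (h x))‖ ^ 2) S μ := hint (by fun_prop)
  have htwice : ∫ x in S, ‖v (h (h x))‖ ^ 2 ∂μ ≤ J * ∫ x in S, ‖v (h x)‖ ^ 2 ∂μ := by
    rw [setIntegral_comp_homothety μ (fun y ↦ ‖v (h y)‖ ^ 2) S w hr, smul_eq_mul]
    refine mul_le_mul_of_nonneg_left ?_ (abs_nonneg _)
    exact setIntegral_mono_set hint_h (ae_of_all _ fun _ ↦ sq_nonneg _)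
      hmaps.image_subset.eventuallyLE
  calc r ^ 2 * ∫ x in S, ‖v x‖ ^ 2 ∂μ = ∫ x in S, r ^ 2 * ‖v x‖ ^ 2 ∂μ :=
        (integral_const_mul _ _).symm
    _ ≤ ∫ x in S, (2 * (1 + r) ^ 2 * ‖v (h x)‖ ^ 2 + 2 * ‖v (h (h x))‖ ^ 2) ∂μ :=
        setIntegral_mono (hint (by fun_prop)) (hint (by fun_prop))
          fun x ↦ sq_mul_norm_sq_affineMap_le v w x r
    _ = 2 * (1 + r) ^ 2 * ∫ x in S, ‖v (h x)‖ ^ 2 ∂μ + 2 * ∫ x in S, ‖v (h (h x))‖ ^ 2 ∂μ := by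
        rw [integral_add (hint_h.const_mul _) (hint_hh.const_mul _), integral_const_mul,
          integral_const_mul]
    _ ≤ (2 * (1 + r) ^ 2 + 2 * J) * ∫ x in S, ‖v (h x)‖ ^ 2 ∂μ := by linarith
    _ = (2 * (1 + r) ^ 2 + 2 * J) * J * ∫ x in h '' S, ‖v x‖ ^ 2 ∂μ := by
        rw [setIntegral_comp_homothety μ (fun y ↦ ‖v y‖ ^ 2) S w hr, smul_eq_mul, mul_assoc]

theorem exists_setIntegral_norm_sq_affineMap_le_weighted (hS : IsCompact S) (hconv : Convex ℝ S)
    (hne : (interior S).Nonempty) {b : E → ℝ} (hb : ContinuousOn b S)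
    (hpos : ∀ x ∈ interior S, 0 < b x) :
    ∃ c : ℝ, 0 < c ∧ ∀ v : E →ᵃ[ℝ] F,
      ∫ x in S, ‖v x‖ ^ 2 ∂μ ≤ c * ∫ x in S, b x * ‖v x‖ ^ 2 ∂μ := by
  obtain ⟨w, hw⟩ := hne
  set r : ℝ := 1 / 2
  have hr : 0 < r := one_half_pos
  set K : Set E := homothety w r '' S
  have hK_int : K ⊆ interior S := image_homothety_subset_interior hconv hw hr.le one_half_lt_one
  have hKS : K ⊆ S := hK_int.trans interior_subset
  have hK : IsCompact K := hS.image (homothety w r).continuous_of_finiteDimensional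
  obtain ⟨β, hβ, hβb⟩ := hK.exists_forall_le' (hb.mono hKS) fun x hx ↦ hpos x (hK_int hx)
  have hb₀ := nonneg_on_of_pos_on_interior hS.isClosed hconv ⟨w, hw⟩ hb hpos
  set C : ℝ := (2 * (1 + r) ^ 2 + 2 * |(r ^ finrank ℝ E)⁻¹|) * |(r ^ finrank ℝ E)⁻¹|
  have hC : 0 < C := by positivity
  refine ⟨C / (r ^ 2 * β), div_pos hC (by positivity), fun v ↦ ?_⟩
  have hv : Continuous fun x ↦ ‖v x‖ ^ 2 := v.continuous_of_finiteDimensional.norm.pow 2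
  have hweight : β * ∫ x in K, ‖v x‖ ^ 2 ∂μ ≤ ∫ x in S, b x * ‖v x‖ ^ 2 ∂μ :=
    mul_setIntegral_le_setIntegral_mul hKS hK.measurableSet hS.measurableSet hβb hb₀
      (fun _ _ ↦ sq_nonneg _) (hv.continuousOn.integrableOn_compact hK)
      ((hb.mul hv.continuousOn).integrableOn_compact hS)
  rw [div_mul_eq_mul_div, le_div_iff₀ (by positivity)]
  calc (∫ x in S, ‖v x‖ ^ 2 ∂μ) * (r ^ 2 * β) = β * (r ^ 2 * ∫ x in S, ‖v x‖ ^ 2 ∂μ) := by ring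
    _ ≤ β * (C * ∫ x in K, ‖v x‖ ^ 2 ∂μ) := by
        refine mul_le_mul_of_nonneg_left ?_ hβ.le
        exact sq_mul_setIntegral_norm_sq_affineMap_le_image_homothety μ hS hr.ne'
          (image_subset_iff.1 hKS) v
    _ = C * (β * ∫ x in K, ‖v x‖ ^ 2 ∂μ) := by ring
    _ ≤ C * ∫ x in S, b x * ‖v x‖ ^ 2 ∂μ := mul_le_mul_of_nonneg_left hweight hC.le

end Integral

section StandardSimplex

variable (d : ℕ)

lemma isClosed_Δstd : IsClosed (Δstd d) := by
  simp only [Δstd, ofPred_and, ofPred_forall]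
  exact (isClosed_iInter fun i ↦ isClosed_le (by fun_prop) (by fun_prop)).inter
    (isClosed_le (by fun_prop) (by fun_prop))

lemma Δstd_subset_closedBall : Δstd d ⊆ closedBall 0 1 := by
  rintro x ⟨hnonneg, hsum⟩
  rw [mem_closedBall_zero_iff, EuclideanSpace.norm_eq, Real.sqrt_le_one]
  refine (Finset.sum_le_sum fun i _ ↦ ?_).trans hsum
  have hle : x i ≤ 1 :=
    (Finset.single_le_sum (fun j _ ↦ hnonneg j) (Finset.mem_univ i)).trans hsum
  rw [Real.norm_eq_abs, sq_abs]
  exact pow_le_of_le_one (hnonneg i) hle two_ne_zero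

lemma isCompact_Δstd : IsCompact (Δstd d) :=
  isCompact_of_isClosed_isBounded (isClosed_Δstd d)
    (isBounded_closedBall.subset (Δstd_subset_closedBall d))

lemma convex_Δstd : Convex ℝ (Δstd d) := by
  rintro x ⟨hx, hx_sum⟩ y ⟨hy, hy_sum⟩ a b ha hb hab
  refine ⟨fun i ↦ add_nonneg (mul_nonneg ha (hx i)) (mul_nonneg hb (hy i)), ?_⟩
  calc ∑ i, (a • x + b • y) i = a * ∑ i, x i + b * ∑ i, y i := by
        simp [Finset.sum_add_distrib, Finset.mul_sum]
    _ ≤ a * 1 + b * 1 := by gcongr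
    _ = 1 := by rw [mul_one, mul_one, hab]

variable {d} in
lemma sum_lt_one_of_mem_interior_Δstd {x : Euc d} (hx : x ∈ interior (Δstd d)) :
    ∑ i, x i < 1 := by
  have hdilate : ∀ᶠ t : ℝ in 𝓝 1, t • x ∈ Δstd d := by
    have htendsto : Tendsto (fun t : ℝ ↦ t • x) (𝓝 1) (𝓝 x) := by
      simpa only [one_smul] using (by fun_prop : Continuous fun t : ℝ ↦ t • x).tendsto 1
    exact htendsto (mem_interior_iff_mem_nhds.1 hx)
  obtain ⟨t, ht_mem, ht⟩ : ∃ t : ℝ, t • x ∈ Δstd d ∧ 1 < t :=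
    ((hdilate.filter_mono nhdsWithin_le_nhds).and (self_mem_nhdsWithin (s := Ioi 1))).exists
  have hscaled : t * ∑ i, x i ≤ 1 := by
    simpa [Finset.mul_sum] using ht_mem.2
  by_contra! hge
  nlinarith

lemma interior_Δstd : interior (Δstd d) = {x | (∀ i, 0 < x i) ∧ ∑ i, x i < 1} := by
  refine Subset.antisymm (fun x hx ↦ ⟨?_, sum_lt_one_of_mem_interior_Δstd hx⟩)
    (interior_maximal (fun x hx ↦ ⟨fun i ↦ (hx.1 i).le, hx.2.le⟩) ?_)
  · have hsubset : Δstd d ⊆ {x | ∀ i, 0 ≤ x i} := fun _ hy ↦ hy.1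
    have hx' := interior_mono hsubset hx
    rwa [interior_euclideanQuadrant] at hx'
  · simp only [ofPred_and, ofPred_forall]
    exact (isOpen_iInter_of_finite fun i ↦ isOpen_lt (by fun_prop) (by fun_prop)).inter
      (isOpen_lt (by fun_prop) (by fun_prop))

lemma nonempty_interior_Δstd : (interior (Δstd d)).Nonempty := by
  rw [interior_Δstd]
  refine ⟨WithLp.toLp 2 fun _ ↦ 1 / ((d : ℝ) + 1), fun i ↦ by positivity, ?_⟩
  simp only [Finset.sum_const, Finset.card_univ, Fintype.card_fin, nsmul_eq_mul]
  rw [mul_one_div, div_lt_one (by positivity)]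
  exact lt_add_one _

lemma continuous_elemBubble : Continuous (elemBubble d) := by
  unfold elemBubble
  fun_prop

variable {d} in
lemma elemBubble_pos_of_mem_interior {x : Euc d} (hx : x ∈ interior (Δstd d)) :
    0 < elemBubble d x := by
  rw [interior_Δstd] at hx
  exact mul_pos (sub_pos.2 hx.2) (Finset.prod_pos fun i _ ↦ hx.1 i)

end StandardSimplex

/-- element-bubble norm equivalence on the standard simplex.
There is `c > 0` depending only on `d` such that `∫_Δ v² ≤ c ∫_Δ b v²`
for every affine `v`. -/
theorem elemBubble_L2_equivalence (d : ℕ) (hd : 1 ≤ d) :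
    ∃ c : ℝ, 0 < c ∧ ∀ v : Euc d →ᵃ[ℝ] ℝ,
      (∫ x in Δstd d, (v x) ^ 2) ≤ c * ∫ x in Δstd d, elemBubble d x * (v x) ^ 2 := by
  obtain ⟨c, hc, hbound⟩ := exists_setIntegral_norm_sq_affineMap_le_weighted (F := ℝ) volume
    (isCompact_Δstd d) (convex_Δstd d) (nonempty_interior_Δstd d)
    (continuous_elemBubble d).continuousOn fun _ ↦ elemBubble_pos_of_mem_interior
  refine ⟨c, hc, fun v ↦ ?_⟩
  simpa only [Real.norm_eq_abs, sq_abs] using hbound v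
end
end

section
/- Let d ≥ 1 and let Δ ⊂ ℝ^d be the standard d-simplex with barycentric coordinates λ₀,…,λ_d and element bubble b = Π_{i=0}^d λ_i. The bilinear form (p, q) ↦ ∫_Δ b p q is an inner product on the (d+1)-dimensional space of affine functions ℝ^d → ℝ, and consequently there exist unique affine functions ψ₀,…,ψ_d : ℝ^d → ℝ such that ∫_Δ b ψ_i λ_j = δ_{ij} for all 0 ≤ i, j ≤ d. In particular the functions φ*_i := ψ_i b satisfy the bi-orthogonality relations ∫_Δ φ*_i λ_j = δ_{ij}. -/
open MeasureTheory Metric Set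
open scoped ENNReal RealInnerProductSpace NNReal Classical

noncomputable section

/-- the barycentric coordinates of the standard `d`-simplex:
`λ₀ = 1 − Σᵢ xᵢ` and `λᵢ(x) = xᵢ` for `1 ≤ i ≤ d`. -/
def bary (d : ℕ) : Fin (d + 1) → Euc d → ℝ :=
  Fin.cases (fun x => 1 - ∑ i, x i) (fun i x => x i)

/-! On any simplex the bubble `b` is nonnegative, and positive in the interior, while a nonzero
affine function cannot vanish on the nonempty interior; hence `(p, q) ↦ ∫ b p q` is positive
definite, in particular nondegenerate, on affine functions. The barycentric coordinates form a
basis of that space, since an affine function is determined by its values at the vertices,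
which can be prescribed arbitrarily. The `ψᵢ` are the dual basis with respect to this form.
The standard simplex is the one with vertices `0, e₁, …, e_d`. -/

section SetIntegral

variable {X : Type*} [TopologicalSpace X] [MeasurableSpace X] {μ : Measure X}
  [μ.IsOpenPosMeasure]

lemma setIntegral_pos_of_exists_mem_interior {K : Set X} {f : X → ℝ} (hK : MeasurableSet K)
    (hcont : ContinuousOn f (interior K)) (hint : IntegrableOn f K μ)
    (hnonneg : ∀ x ∈ K, 0 ≤ f x) (hne : ∃ x ∈ interior K, f x ≠ 0) :
    0 < ∫ x in K, f x ∂μ := by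
  rw [setIntegral_pos_iff_support_of_nonneg_ae (ae_restrict_of_forall_mem hK hnonneg) hint]
  have hopen : IsOpen (interior K ∩ f ⁻¹' {0}ᶜ) :=
    hcont.isOpen_inter_preimage isOpen_interior isOpen_compl_singleton
  refine (hopen.measure_pos μ hne).trans_le (measure_mono ?_)
  exact fun x ⟨hxK, hfx⟩ => ⟨hfx, interior_subset hxK⟩

end SetIntegral

section BarycentricCoordinates

variable {ι k V P : Type*} [Fintype ι] [CommRing k] [AddCommGroup V] [Module k V]
  [AddTorsor V P]

/-- The barycentric coordinates of an affine basis, as a basis of the space of affine functions.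
It is encoded through its coefficient map, which sends an affine function to its values at the
vertices. -/
def nodalBasis (b : AffineBasis ι k P) : Module.Basis ι k (P →ᵃ[k] k) :=
  .ofEquivFun
    { toFun f i := f (b i)
      map_add' _ _ := rfl
      map_smul' _ _ := rfl
      invFun c := (Fintype.linearCombination k c).toAffineMap.comp b.coords
      left_inv f := AffineMap.ext_on b.tot <| by
        rintro _ ⟨i, rfl⟩
        simp [Fintype.linearCombination_apply, b.coord_apply]
      right_inv c := by
        ext i
        simp [Fintype.linearCombination_apply, b.coord_apply] }

lemma nodalBasis_apply (b : AffineBasis ι k P) (i : ι) : nodalBasis b i = b.coord i := by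
  ext x
  simp [nodalBasis, Fintype.linearCombination_apply, Pi.single_apply]

/-- The element bubble of the simplex spanned by an affine basis: the product of its barycentric
coordinates, as a function on the whole space. -/
def simplexBubble (b : AffineBasis ι k P) (x : P) : k := ∏ i, b.coord i x

end BarycentricCoordinates

section Simplex

variable {ι E : Type*} [NormedAddCommGroup E] [NormedSpace ℝ E]

lemma continuous_of_affineBasis {F : Type*} [NormedAddCommGroup F] [NormedSpace ℝ F] [Finite ι]
    (b : AffineBasis ι ℝ E) (p : E →ᵃ[ℝ] F) : Continuous p :=
  have := b.finiteDimensional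
  p.continuous_of_finiteDimensional

variable (b : AffineBasis ι ℝ E)

lemma exists_mem_interior_convexHull_apply_ne_zero {F : Type*} [AddCommGroup F] [Module ℝ F]
    [Finite ι] {v : E →ᵃ[ℝ] F} (hv : v ≠ 0) :
    ∃ x ∈ interior (convexHull ℝ (range b)), v x ≠ 0 := by
  have := Fintype.ofFinite ι
  contrapose! hv
  have hspan : affineSpan ℝ (interior (convexHull ℝ (range b))) = ⊤ :=
    isOpen_interior.affineSpan_eq_top ⟨_, b.centroid_mem_interior_convexHull⟩
  exact AffineMap.ext_on hspan hv

variable [Fintype ι]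

lemma simplexBubble_nonneg {x : E} (hx : x ∈ convexHull ℝ (range b)) : 0 ≤ simplexBubble b x := by
  rw [b.convexHull_eq_nonneg_coord] at hx
  exact Finset.prod_nonneg fun i _ => hx i

lemma simplexBubble_pos {x : E} (hx : x ∈ interior (convexHull ℝ (range b))) :
    0 < simplexBubble b x := by
  rw [b.interior_convexHull] at hx
  exact Finset.prod_pos fun i _ => hx i

lemma continuous_simplexBubble : Continuous (simplexBubble b) :=
  continuous_finsetProd _ fun i _ => continuous_of_affineBasis b (b.coord i)

variable [MeasurableSpace E] [OpensMeasurableSpace E] (μ : Measure E)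
  [IsFiniteMeasureOnCompacts μ]

lemma integrableOn_simplexBubble_mul (p q : E →ᵃ[ℝ] ℝ) :
    IntegrableOn (fun x => simplexBubble b x * p x * q x) (convexHull ℝ (range b)) μ :=
  (((continuous_simplexBubble b).mul (continuous_of_affineBasis b p)).mul
    (continuous_of_affineBasis b q)).continuousOn.integrableOn_compact
      ((finite_range b).isCompact_convexHull ℝ)

/-- The `L²` pairing of affine functions on a simplex weighted by its element bubble. -/
def bubbleForm : LinearMap.BilinForm ℝ (E →ᵃ[ℝ] ℝ) :=
  LinearMap.mk₂ ℝ
    (fun p q => ∫ x in convexHull ℝ (range b), simplexBubble b x * p x * q x ∂μ)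
    (fun p₁ p₂ q => by
      rw [← integral_add (integrableOn_simplexBubble_mul b μ p₁ q)
        (integrableOn_simplexBubble_mul b μ p₂ q)]
      simp only [AffineMap.coe_add, Pi.add_apply, mul_add, add_mul])
    (fun c p q => by
      simp only [AffineMap.coe_smul, Pi.smul_apply, smul_eq_mul, ← integral_const_mul, mul_assoc,
        mul_left_comm _ c])
    (fun p q₁ q₂ => by
      rw [← integral_add (integrableOn_simplexBubble_mul b μ p q₁)
        (integrableOn_simplexBubble_mul b μ p q₂)]
      simp only [AffineMap.coe_add, Pi.add_apply, mul_add])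
    (fun c p q => by
      simp only [AffineMap.coe_smul, Pi.smul_apply, smul_eq_mul, ← integral_const_mul, mul_assoc,
        mul_left_comm _ c])

lemma bubbleForm_apply (p q : E →ᵃ[ℝ] ℝ) :
    bubbleForm b μ p q = ∫ x in convexHull ℝ (range b), simplexBubble b x * p x * q x ∂μ :=
  rfl

lemma isSymm_bubbleForm : (bubbleForm b μ).IsSymm :=
  ⟨fun p q => by simp only [bubbleForm_apply, mul_right_comm]⟩

variable [μ.IsOpenPosMeasure]

lemma bubbleForm_self_pos {v : E →ᵃ[ℝ] ℝ} (hv : v ≠ 0) : 0 < bubbleForm b μ v v := by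
  have hcont := continuous_of_affineBasis b v
  have hcompact := (finite_range b).isCompact_convexHull ℝ
  obtain ⟨x, hx, hvx⟩ := exists_mem_interior_convexHull_apply_ne_zero b hv
  refine setIntegral_pos_of_exists_mem_interior hcompact.measurableSet
    (((continuous_simplexBubble b).mul hcont).mul hcont).continuousOn
    (integrableOn_simplexBubble_mul b μ v v) (fun y hy => ?_)
    ⟨x, hx, mul_ne_zero (mul_ne_zero (simplexBubble_pos b hx).ne' hvx) hvx⟩
  rw [mul_assoc]
  exact mul_nonneg (simplexBubble_nonneg b hy) (mul_self_nonneg _)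

lemma nondegenerate_bubbleForm : (bubbleForm b μ).Nondegenerate := by
  refine (LinearMap.IsRefl.nondegenerate_iff_separatingLeft (isSymm_bubbleForm b μ).isRefl).2
    (LinearMap.BilinForm.separatingLeft_of_anisotropic fun v hv => ?_)
  by_contra hne
  exact (bubbleForm_self_pos b μ hne).ne' hv

theorem bubble_dual_basis_general [DecidableEq ι] :
    (∀ v : E →ᵃ[ℝ] ℝ, v ≠ 0 →
      0 < ∫ x in convexHull ℝ (range b), simplexBubble b x * (v x) ^ 2 ∂μ) ∧
      (∃! ψ : ι → (E →ᵃ[ℝ] ℝ),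
        ∀ i j, (∫ x in convexHull ℝ (range b), simplexBubble b x * ψ i x * b.coord j x ∂μ)
          = if i = j then 1 else 0) := by
  refine ⟨fun v hv => ?_, ?_⟩
  · simpa only [bubbleForm_apply, sq, mul_assoc] using bubbleForm_self_pos b μ hv
  · have hdual (ψ : ι → (E →ᵃ[ℝ] ℝ)) :=
      LinearMap.BilinForm.dualBasis_eq_iff (nondegenerate_bubbleForm b μ) (nodalBasis b) ψ
    simp only [nodalBasis_apply, bubbleForm_apply, @eq_comm ι] at hdual
    exact ⟨_, (hdual _).1 rfl, fun ψ hψ => ((hdual ψ).2 hψ).symm⟩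

end Simplex

section StandardSimplex

variable {d : ℕ}

/-- The vertices `0, e₁, …, e_d` of the standard simplex, in the order of `bary`. -/
def stdVertex (d : ℕ) : Fin (d + 1) → Euc d := Fin.cons 0 fun i => EuclideanSpace.single i 1

lemma sum_bary (x : Euc d) : ∑ i, bary d i x = 1 := by
  simp [Fin.sum_univ_succ, bary]

lemma prod_bary (x : Euc d) : ∏ i, bary d i x = elemBubble d x := by
  simp [Fin.prod_univ_succ, bary, elemBubble]

lemma forall_bary_nonneg_iff {x : Euc d} : (∀ i, 0 ≤ bary d i x) ↔ x ∈ Δstd d := by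
  simp [Fin.forall_fin_succ, bary, Δstd, and_comm]

lemma affineCombination_stdVertex_bary (x : Euc d) :
    Finset.univ.affineCombination ℝ (stdVertex d) (fun i => bary d i x) = x := by
  rw [Finset.affineCombination_eq_linear_combination _ _ _ (sum_bary x)]
  ext j
  simp [Fin.sum_univ_succ, bary, stdVertex, Pi.single_apply]

lemma affineSpan_range_stdVertex : affineSpan ℝ (range (stdVertex d)) = ⊤ := by
  refine eq_top_iff.2 fun x _ => ?_
  rw [← affineCombination_stdVertex_bary x]
  exact affineCombination_mem_affineSpan (sum_bary x) _

lemma affineIndependent_stdVertex : AffineIndependent ℝ (stdVertex d) := by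
  rw [affineIndependent_iff_finrank_vectorSpan_eq ℝ _ (Fintype.card_fin _),
    ← direction_affineSpan, affineSpan_range_stdVertex, AffineSubspace.direction_top, finrank_top,
    finrank_euclideanSpace_fin]

/-- The vertices of the standard simplex as an affine basis. -/
def stdAffineBasis (d : ℕ) : AffineBasis (Fin (d + 1)) ℝ (Euc d) where
  toFun := stdVertex d
  ind' := affineIndependent_stdVertex
  tot' := affineSpan_range_stdVertex

lemma stdAffineBasis_coord (i : Fin (d + 1)) (x : Euc d) :
    (stdAffineBasis d).coord i x = bary d i x := by
  conv_lhs => rw [← affineCombination_stdVertex_bary x]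
  exact (stdAffineBasis d).coord_apply_combination_of_mem (Finset.mem_univ i) (sum_bary x)

lemma convexHull_range_stdAffineBasis : convexHull ℝ (range (stdAffineBasis d)) = Δstd d := by
  ext x
  simp only [AffineBasis.convexHull_eq_nonneg_coord, stdAffineBasis_coord, mem_ofPred_eq,
    forall_bary_nonneg_iff]

lemma simplexBubble_stdAffineBasis : simplexBubble (stdAffineBasis d) = elemBubble d := by
  ext x
  simp only [simplexBubble, stdAffineBasis_coord, prod_bary]

end StandardSimplex

/-- the bubble-weighted pairing is an inner product on affine functions;
existence and uniqueness of the dual basis. The form `(p,q) ↦ ∫_Δ b p q` is positive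
definite on affine functions, and there is a unique family of affine functions `ψᵢ` with
`∫_Δ b ψᵢ λⱼ = δᵢⱼ`; in particular `φ*ᵢ := ψᵢ b` satisfies `∫_Δ φ*ᵢ λⱼ = δᵢⱼ`. -/
theorem bubble_dual_basis (d : ℕ) (hd : 1 ≤ d) :
    (∀ v : Euc d →ᵃ[ℝ] ℝ, v ≠ 0 → 0 < ∫ x in Δstd d, elemBubble d x * (v x) ^ 2) ∧
      (∃! ψ : Fin (d + 1) → (Euc d →ᵃ[ℝ] ℝ),
        ∀ i j, (∫ x in Δstd d, elemBubble d x * ψ i x * bary d j x)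
          = if i = j then 1 else 0) := by
  simpa only [convexHull_range_stdAffineBasis, simplexBubble_stdAffineBasis, stdAffineBasis_coord]
    using bubble_dual_basis_general (stdAffineBasis d) volume
end
end

section
/- Let d ≥ 1, κ > 0, and let T ⊂ ℝ^d be a nondegenerate d-simplex (the convex hull of d+1 affinely independent points) with diameter h_T, inradius ρ_T, and shape parameter μ := h_T/ρ_T. Let (λ_z)_{z∈V_T} be the barycentric coordinates of T and b_T := Π_{z∈V_T} λ_z the element bubble. There exists a constant C > 0 depending only on d and μ such that there exist affine functions (ψ_z)_{z∈V_T} for which the functions φ*_z := ψ_z b_T (extended by zero outside T) satisfy ∫_T φ*_z λ_y = δ_{zy} for all vertices y, z of T, together with the robust energy bound ‖φ*_z‖_{E,T} := (∫_T |∇φ*_z|² + κ² ∫_T (φ*_z)²)^{1/2} ≤ C |T|^{−1/2} max{h_T^{−1}, κ}, where |T| denotes the Lebesgue measure of T. -/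
open MeasureTheory Metric Set
open scoped ENNReal RealInnerProductSpace NNReal Classical

noncomputable section

/-!
The average over a simplex of a function of the barycentric coordinates does not depend on the
simplex, since any two simplices of the same dimension are affinely equivalent. Hence the mass
matrix of the `λ_z` weighted by the bubble `b_T` and divided by `|T|` is one fixed matrix. It is
positive definite because `b_T > 0` inside `T`, and the rows of its inverse, divided by `|T|`, are
the vertex values of the `ψ_z`. Each `λ_z` takes values in `[0, 1]` on the balls contained in `T`,
so `|∇λ_z| ≤ 1 / ρ_T ≤ μ / h_T`; by the product rule `|φ*_z|` and `|∇φ*_z|` are therefore bounded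
pointwise on `T` by multiples of `1 / |T|` and `1 / (h_T |T|)`.
-/

section NodalInterpolant

variable {k ι V P W : Type*} [Ring k] [AddCommGroup V] [Module k V] [AddTorsor V P]
  [AddCommGroup W] [Module k W] [Fintype ι]

/-- The affine map taking the value `v i` at the vertex `B i`. With `v` the vertices of another
simplex it is the affine map of one simplex onto the other; with `v` scalar it is a first-degree
finite element function on the simplex. -/
def nodalInterpolant (B : AffineBasis ι k P) (v : ι → W) : P →ᵃ[k] W :=
  (Fintype.linearCombination k v).toAffineMap.comp B.coords

lemma nodalInterpolant_apply (B : AffineBasis ι k P) (v : ι → W) (x : P) :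
    nodalInterpolant B v x = ∑ i, B.coord i x • v i := rfl

@[simp]
lemma nodalInterpolant_apply_vertex (B : AffineBasis ι k P) (v : ι → W) (i : ι) :
    nodalInterpolant B v (B i) = v i := by
  simp [nodalInterpolant_apply, B.coord_apply]

@[simp]
lemma nodalInterpolant_single [DecidableEq ι] (B : AffineBasis ι k P) (i : ι) :
    nodalInterpolant B (Pi.single i (1 : k)) = B.coord i := by
  ext x
  simp [nodalInterpolant_apply, Pi.single_apply]

lemma coord_nodalInterpolant (B₀ : AffineBasis ι k P) (B : AffineBasis ι k W) (i : ι) (x : P) :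
    B.coord i (nodalInterpolant B₀ B x) = B₀.coord i x := by
  have hsum := B₀.sum_coord_apply_eq_one x
  rw [nodalInterpolant_apply, ← Finset.univ.affineCombination_eq_linear_combination _ _ hsum,
    B.coord_apply_combination_of_mem (Finset.mem_univ i) hsum]

lemma nodalInterpolant_injective (B₀ : AffineBasis ι k P) (B : AffineBasis ι k W) :
    Function.Injective (nodalInterpolant B₀ B) := fun x y hxy =>
  B₀.ext_elem fun i => by
    rw [← coord_nodalInterpolant B₀ B, hxy, coord_nodalInterpolant]

end NodalInterpolant

section Simplex

variable {ι E : Type*} [NormedAddCommGroup E] [NormedSpace ℝ E]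

lemma isCompact_convexHull_range [Finite ι] (B : AffineBasis ι ℝ E) :
    IsCompact (convexHull ℝ (range B)) :=
  (finite_range B).isCompact_convexHull (𝕜 := ℝ)

lemma interior_convexHull_range_nonempty [Finite ι] (B : AffineBasis ι ℝ E) :
    (interior (convexHull ℝ (range B))).Nonempty :=
  have := Fintype.ofFinite ι
  ⟨_, B.centroid_mem_interior_convexHull⟩

lemma measureReal_convexHull_range_pos [Finite ι] [MeasurableSpace E] (ν : Measure E)
    [IsFiniteMeasureOnCompacts ν] [ν.IsOpenPosMeasure] (B : AffineBasis ι ℝ E) :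
    0 < ν.real (convexHull ℝ (range B)) :=
  ENNReal.toReal_pos
    (ν.measure_pos_of_nonempty_interior (interior_convexHull_range_nonempty B)).ne'
    (isCompact_convexHull_range B).measure_lt_top.ne

lemma coord_mem_Icc [Finite ι] (B : AffineBasis ι ℝ E) {x : E}
    (hx : x ∈ convexHull ℝ (range B)) (i : ι) : B.coord i x ∈ Icc 0 1 := by
  have := Fintype.ofFinite ι
  rw [B.convexHull_eq_nonneg_coord] at hx
  refine ⟨hx i, ?_⟩
  rw [← B.sum_coord_apply_eq_one x]
  exact Finset.single_le_sum (f := fun j => B.coord j x) (fun j _ => hx j) (Finset.mem_univ i)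

lemma norm_coord_le_one [Finite ι] (B : AffineBasis ι ℝ E) {x : E}
    (hx : x ∈ convexHull ℝ (range B)) (i : ι) : ‖B.coord i x‖ ≤ 1 := by
  obtain ⟨hnonneg, hle⟩ := coord_mem_Icc B hx i
  rwa [Real.norm_of_nonneg hnonneg]

variable [Fintype ι] {F : Type*} [NormedAddCommGroup F] [NormedSpace ℝ F]

lemma norm_nodalInterpolant_le (B : AffineBasis ι ℝ E) (v : ι → F) {x : E}
    (hx : x ∈ convexHull ℝ (range B)) : ‖nodalInterpolant B v x‖ ≤ ∑ i, ‖v i‖ := by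
  rw [nodalInterpolant_apply]
  refine norm_sum_le_of_le _ fun i _ => ?_
  rw [norm_smul]
  exact mul_le_of_le_one_left (norm_nonneg _) (norm_coord_le_one B hx i)

lemma exists_mem_interior_nodalInterpolant_ne_zero (B : AffineBasis ι ℝ E) {v : ι → F}
    (hv : v ≠ 0) : ∃ x ∈ interior (convexHull ℝ (range B)), nodalInterpolant B v x ≠ 0 := by
  by_contra! hzero
  have hspan : affineSpan ℝ (interior (convexHull ℝ (range B))) = ⊤ :=
    isOpen_interior.affineSpan_eq_top (interior_convexHull_range_nonempty B)
  have heq : nodalInterpolant B v = 0 := AffineMap.ext_on hspan hzero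
  refine hv (funext fun i => ?_)
  rw [← nodalInterpolant_apply_vertex B v i, heq]
  rfl

/-- The element bubble `b_T = ∏ λ_i`, the product of the barycentric coordinates. -/
def bubble (B : AffineBasis ι ℝ E) (x : E) : ℝ := ∏ i, B.coord i x

lemma bubble_nonneg (B : AffineBasis ι ℝ E) {x : E} (hx : x ∈ convexHull ℝ (range B)) :
    0 ≤ bubble B x :=
  Finset.prod_nonneg fun i _ => (coord_mem_Icc B hx i).1

lemma norm_bubble_le_one (B : AffineBasis ι ℝ E) {x : E} (hx : x ∈ convexHull ℝ (range B)) :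
    ‖bubble B x‖ ≤ 1 := by
  rw [bubble, norm_prod]
  exact Finset.prod_le_one (fun _ _ => norm_nonneg _) fun i _ => norm_coord_le_one B hx i

lemma norm_nodalInterpolant_mul_bubble_le (B : AffineBasis ι ℝ E) (a : ι → ℝ) {x : E}
    (hx : x ∈ convexHull ℝ (range B)) :
    ‖nodalInterpolant B a x * bubble B x‖ ≤ ∑ i, ‖a i‖ := by
  rw [norm_mul]
  exact (mul_le_of_le_one_right (norm_nonneg _) (norm_bubble_le_one B hx)).trans
    (norm_nodalInterpolant_le B a hx)

lemma bubble_pos_of_mem_interior (B : AffineBasis ι ℝ E) {x : E}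
    (hx : x ∈ interior (convexHull ℝ (range B))) : 0 < bubble B x := by
  rw [B.interior_convexHull] at hx
  exact Finset.prod_pos fun i _ => hx i

variable [FiniteDimensional ℝ E]

lemma continuous_nodalInterpolant (B : AffineBasis ι ℝ E) (v : ι → F) :
    Continuous (nodalInterpolant B v) :=
  AffineMap.continuous_of_finiteDimensional _

lemma continuous_bubble (B : AffineBasis ι ℝ E) : Continuous (bubble B) :=
  continuous_finsetProd _ fun i _ => continuous_barycentric_coord B i

end Simplex

section AffineInvariance

variable {ι E F : Type*} [NormedAddCommGroup E] [NormedSpace ℝ E]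
  [FiniteDimensional ℝ E] [MeasurableSpace E] [BorelSpace E]
  [NormedAddCommGroup F] [NormedSpace ℝ F] (ν : Measure E) [ν.IsAddHaarMeasure]

lemma setAverage_image_affineMap {f : E →ᵃ[ℝ] E} (hf : Function.Injective f) {s : Set E}
    (hs : MeasurableSet s) (g : E → F) :
    ⨍ x in f '' s, g x ∂ν = ⨍ x in s, g (f x) ∂ν := by
  let fc : E →ᴬ[ℝ] E := ⟨f, f.continuous_of_finiteDimensional⟩
  have hdet : |fc.contLinear.det| ≠ 0 := by
    have hunit : IsUnit f.linear.det :=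
      LinearMap.isUnit_iff_isUnit_det _ |>.1 <|
        (LinearMap.isUnit_iff_ker_eq_bot _).2 <|
          LinearMap.ker_eq_bot.2 (f.linear_injective_iff.2 hf)
    exact abs_ne_zero.2 hunit.ne_zero
  have hderiv (x : E) (_ : x ∈ s) : HasFDerivWithinAt f fc.contLinear s x :=
    fc.hasFDerivAt.hasFDerivWithinAt
  have hvol : ν.real (f '' s) = |fc.contLinear.det| * ν.real s := by
    simpa [mul_comm] using
      integral_image_eq_integral_abs_det_fderiv_smul ν hs hderiv hf.injOn fun _ => (1 : ℝ)
  rw [setAverage_eq, setAverage_eq, hvol,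
    integral_image_eq_integral_abs_det_fderiv_smul ν hs hderiv hf.injOn, integral_smul,
    smul_smul, mul_inv_rev, inv_mul_cancel_right₀ hdet]

lemma setAverage_comp_coords_eq [Finite ι] (B₀ B : AffineBasis ι ℝ E) (g : (ι → ℝ) → F) :
    ⨍ x in convexHull ℝ (range B), g (B.coords x) ∂ν =
      ⨍ x in convexHull ℝ (range B₀), g (B₀.coords x) ∂ν := by
  have := Fintype.ofFinite ι
  have himage : nodalInterpolant B₀ B '' convexHull ℝ (range B₀) = convexHull ℝ (range B) := by
    rw [AffineMap.image_convexHull, ← range_comp]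
    congr 2
    exact funext (nodalInterpolant_apply_vertex B₀ B)
  have hcoords (x : E) : B.coords (nodalInterpolant B₀ B x) = B₀.coords x :=
    funext fun i => coord_nodalInterpolant B₀ B i x
  rw [← himage, setAverage_image_affineMap ν (nodalInterpolant_injective B₀ B)
    (isCompact_convexHull_range B₀).measurableSet]
  simp only [hcoords]

/-- The mass matrix of the barycentric coordinates, weighted by the bubble and normalised by the
measure of the simplex. The normalisation makes it the same matrix for all simplices. -/
def bubbleMassMatrix [Fintype ι] (B : AffineBasis ι ℝ E) : Matrix ι ι ℝ :=
  .of fun z y => ⨍ x in convexHull ℝ (range B), B.coord z x * bubble B x * B.coord y x ∂ν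

lemma bubbleMassMatrix_eq [Fintype ι] (B₀ B : AffineBasis ι ℝ E) :
    bubbleMassMatrix ν B = bubbleMassMatrix ν B₀ := by
  ext z y
  exact setAverage_comp_coords_eq ν B₀ B fun l => l z * (∏ i, l i) * l y

end AffineInvariance

section DualBasis

open Matrix

variable {ι E : Type*} [Fintype ι] [NormedAddCommGroup E] [NormedSpace ℝ E]
  [FiniteDimensional ℝ E] [MeasurableSpace E] [BorelSpace E]
  (ν : Measure E) [IsFiniteMeasureOnCompacts ν]

lemma setAverage_nodalInterpolant_mul_bubble_mul_nodalInterpolant (B : AffineBasis ι ℝ E)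
    (a c : ι → ℝ) :
    ⨍ x in convexHull ℝ (range B),
        nodalInterpolant B a x * bubble B x * nodalInterpolant B c x ∂ν =
      a ⬝ᵥ bubbleMassMatrix ν B *ᵥ c := by
  have hexpand (x : E) : nodalInterpolant B a x * bubble B x * nodalInterpolant B c x =
      ∑ z, ∑ y, a z * (B.coord z x * bubble B x * B.coord y x * c y) := by
    simp only [nodalInterpolant_apply, smul_eq_mul]
    rw [Finset.sum_mul, Finset.sum_mul_sum]
    exact Finset.sum_congr rfl fun z _ => Finset.sum_congr rfl fun y _ => by ring
  have hint {f : E → ℝ} (hf : Continuous f) : IntegrableOn f (convexHull ℝ (range B)) ν :=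
    hf.continuousOn.integrableOn_compact (isCompact_convexHull_range B)
  have hbubble := continuous_bubble B
  have hcoord := continuous_barycentric_coord B
  simp only [hexpand, setAverage_eq, smul_eq_mul, dotProduct, mulVec, bubbleMassMatrix, of_apply]
  rw [integral_finsetSum _ fun z _ => hint (by fun_prop), Finset.mul_sum]
  refine Finset.sum_congr rfl fun z _ => ?_
  rw [integral_finsetSum _ fun y _ => hint (by fun_prop), Finset.mul_sum, Finset.mul_sum]
  refine Finset.sum_congr rfl fun y _ => ?_
  rw [integral_const_mul, integral_mul_const]
  ring

variable [ν.IsOpenPosMeasure]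

lemma setAverage_nodalInterpolant_mul_bubble_mul_self_pos (B : AffineBasis ι ℝ E) {a : ι → ℝ}
    (ha : a ≠ 0) :
    0 < ⨍ x in convexHull ℝ (range B),
      nodalInterpolant B a x * bubble B x * nodalInterpolant B a x ∂ν := by
  set T := convexHull ℝ (range B)
  set q := fun x => nodalInterpolant B a x * bubble B x * nodalInterpolant B a x
  have hcont : Continuous q :=
    ((continuous_nodalInterpolant B a).mul (continuous_bubble B)).mul
      (continuous_nodalInterpolant B a)
  have hnonneg : ∀ x ∈ T, 0 ≤ q x := fun x hx => by
    have hsq : q x = nodalInterpolant B a x ^ 2 * bubble B x := by ring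
    rw [hsq]
    exact mul_nonneg (sq_nonneg _) (bubble_nonneg B hx)
  obtain ⟨x₀, hx₀, hne⟩ := exists_mem_interior_nodalInterpolant_ne_zero B ha
  have hq₀ : q x₀ ≠ 0 := mul_ne_zero (mul_ne_zero hne (bubble_pos_of_mem_interior B hx₀).ne') hne
  have hsupport : 0 < ν (q.support ∩ T) :=
    ν.measure_pos_of_nonempty_interior ⟨x₀, mem_interior.2 ⟨q.support ∩ interior T,
      inter_subset_inter_right _ interior_subset,
      hcont.isOpen_support.inter isOpen_interior, hq₀, hx₀⟩⟩
  have hT := isCompact_convexHull_range B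
  rw [setAverage_eq, smul_eq_mul]
  refine mul_pos (inv_pos.2 (measureReal_convexHull_range_pos ν B)) ?_
  rwa [setIntegral_pos_iff_support_of_nonneg_ae
    (ae_restrict_of_forall_mem hT.measurableSet hnonneg)
    (hcont.continuousOn.integrableOn_compact hT)]

lemma posDef_bubbleMassMatrix (B : AffineBasis ι ℝ E) : (bubbleMassMatrix ν B).PosDef := by
  refine .of_dotProduct_mulVec_pos ?_ fun a ha => ?_
  · ext z y
    have hsymm (x : E) : B.coord y x * bubble B x * B.coord z x =
        B.coord z x * bubble B x * B.coord y x := by ring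
    simp only [bubbleMassMatrix, conjTranspose_apply, of_apply, star_trivial, hsymm]
  · rw [star_trivial, ← setAverage_nodalInterpolant_mul_bubble_mul_nodalInterpolant]
    exact setAverage_nodalInterpolant_mul_bubble_mul_self_pos ν B ha

variable [DecidableEq ι]

/-- The affine factor `ψ_z` of the dual function `φ*_z = ψ_z b_T`: its vertex values are the row
`z` of the inverse mass matrix, divided by the measure of the simplex. -/
def dualWeight (B : AffineBasis ι ℝ E) (z : ι) : E →ᵃ[ℝ] ℝ :=
  nodalInterpolant B ((ν.real (convexHull ℝ (range B)))⁻¹ • (bubbleMassMatrix ν B)⁻¹ z)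

lemma setIntegral_dualWeight_mul_bubble_mul_coord (B : AffineBasis ι ℝ E) (z y : ι) :
    ∫ x in convexHull ℝ (range B), dualWeight ν B z x * bubble B x * B.coord y x ∂ν =
      if z = y then 1 else 0 := by
  have hdet : IsUnit (bubbleMassMatrix ν B).det :=
    (isUnit_iff_isUnit_det _).1 (posDef_bubbleMassMatrix ν B).isUnit
  have haverage := setAverage_nodalInterpolant_mul_bubble_mul_nodalInterpolant ν B
    ((ν.real (convexHull ℝ (range B)))⁻¹ • (bubbleMassMatrix ν B)⁻¹ z) (Pi.single y 1)
  have hinv : (bubbleMassMatrix ν B)⁻¹ z ⬝ᵥ bubbleMassMatrix ν B *ᵥ Pi.single y 1 =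
      if z = y then 1 else 0 := by
    rw [mulVec_single_one, ← one_apply, ← nonsing_inv_mul _ hdet]
    rfl
  rw [smul_dotProduct, hinv, setAverage_eq, nodalInterpolant_single] at haverage
  exact smul_right_injective ℝ (inv_ne_zero (measureReal_convexHull_range_pos ν B).ne') haverage

end DualBasis

section Derivative

variable {ι E F : Type*} [NormedAddCommGroup E] [NormedSpace ℝ E]
  [NormedAddCommGroup F] [NormedSpace ℝ F]

lemma mul_norm_contLinear_le_of_forall_mem_ball {f : E →ᴬ[ℝ] F} {c : E} {r D : ℝ} (hr : 0 < r)
    (hf : ∀ x ∈ ball c r, ‖f x - f c‖ ≤ D) : r * ‖f.contLinear‖ ≤ D := by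
  rw [← le_div_iff₀' hr, ← f.contLinear.sSup_unit_ball_eq_norm]
  refine csSup_le ((nonempty_ball.2 one_pos).image _) ?_
  rintro _ ⟨v, hv, rfl⟩
  have hmem : r • v +ᵥ c ∈ ball c r := by
    rw [mem_ball_zero_iff] at hv
    simpa [norm_smul, abs_of_pos hr] using mul_lt_of_lt_one_right hr hv
  have hle := hf _ hmem
  rw [f.map_vadd, vadd_eq_add, add_sub_cancel_right, map_smul, norm_smul,
    Real.norm_of_nonneg hr.le] at hle
  rwa [le_div_iff₀' hr]

lemma norm_fderiv_finsetProd_le {s : Finset ι} {f : ι → E → ℝ} {x : E} {G : ℝ}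
    (hf : ∀ i ∈ s, DifferentiableAt ℝ (f i) x) (hle : ∀ i ∈ s, ‖f i x‖ ≤ 1)
    (hG : ∀ i ∈ s, ‖fderiv ℝ (f i) x‖ ≤ G) :
    ‖fderiv ℝ (fun x => ∏ i ∈ s, f i x) x‖ ≤ s.card * G := by
  rw [fderiv_finsetProd hf, ← nsmul_eq_mul, ← Finset.sum_const]
  refine norm_sum_le_of_le _ fun i hi => ?_
  rw [norm_smul, norm_prod]
  refine (mul_le_of_le_one_left (norm_nonneg _) ?_).trans (hG i hi)
  exact Finset.prod_le_one (fun _ _ => norm_nonneg _) fun j hj => hle j (Finset.mem_of_mem_erase hj)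

variable [FiniteDimensional ℝ E]

lemma differentiable_affineMap (f : E →ᵃ[ℝ] F) : Differentiable ℝ f :=
  ContinuousAffineMap.differentiable ⟨f, f.continuous_of_finiteDimensional⟩

variable [Fintype ι]

lemma norm_fderiv_nodalInterpolant_le (B : AffineBasis ι ℝ E) (v : ι → F) {x : E} {G : ℝ}
    (hG : ∀ i, ‖fderiv ℝ (B.coord i) x‖ ≤ G) :
    ‖fderiv ℝ (nodalInterpolant B v) x‖ ≤ (∑ i, ‖v i‖) * G := by
  have hderiv : HasFDerivAt (nodalInterpolant B v)
      (∑ i, (fderiv ℝ (B.coord i) x).smulRight (v i)) x :=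
    HasFDerivAt.fun_sum fun i _ =>
      (differentiable_affineMap (B.coord i) x).hasFDerivAt.smul_const (v i)
  rw [hderiv.fderiv, Finset.sum_mul]
  refine norm_sum_le_of_le _ fun i _ => ?_
  rw [ContinuousLinearMap.norm_smulRight_apply, mul_comm]
  exact mul_le_mul_of_nonneg_left (hG i) (norm_nonneg _)

lemma norm_fderiv_nodalInterpolant_mul_bubble_le (B : AffineBasis ι ℝ E) (a : ι → ℝ) {x : E}
    (hx : x ∈ convexHull ℝ (range B)) {G : ℝ} (hG : ∀ i, ‖fderiv ℝ (B.coord i) x‖ ≤ G) :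
    ‖fderiv ℝ (fun x => nodalInterpolant B a x * bubble B x) x‖ ≤
      (∑ i, ‖a i‖) * ((Fintype.card ι + 1) * G) := by
  have hcoord (i : ι) := differentiable_affineMap (B.coord i) x
  have hbubble : ‖fderiv ℝ (bubble B) x‖ ≤ Fintype.card ι * G :=
    norm_fderiv_finsetProd_le (fun i _ => hcoord i) (fun i _ => norm_coord_le_one B hx i)
      fun i _ => hG i
  have hdiff : DifferentiableAt ℝ (bubble B) x :=
    (HasFDerivAt.finsetProd fun i _ => (hcoord i).hasFDerivAt).differentiableAt
  rw [fderiv_fun_mul (differentiable_affineMap _ x) hdiff]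
  calc _ ≤ ‖nodalInterpolant B a x‖ * ‖fderiv ℝ (bubble B) x‖ +
        ‖bubble B x‖ * ‖fderiv ℝ (nodalInterpolant B a) x‖ := by
        refine (norm_add_le _ _).trans_eq ?_
        rw [norm_smul, norm_smul]
    _ ≤ (∑ i, ‖a i‖) * (Fintype.card ι * G) + 1 * ((∑ i, ‖a i‖) * G) := by
        gcongr
        · exact norm_nodalInterpolant_le B a hx
        · exact norm_bubble_le_one B hx
        · exact norm_fderiv_nodalInterpolant_le B a hG
    _ = (∑ i, ‖a i‖) * ((Fintype.card ι + 1) * G) := by ring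

end Derivative

section Energy

variable {d : ℕ}

lemma norm_gradient {E : Type*} [NormedAddCommGroup E] [InnerProductSpace ℝ E] [CompleteSpace E]
    (f : E → ℝ) (x : E) : ‖gradient f x‖ = ‖fderiv ℝ f x‖ :=
  (InnerProductSpace.toDual ℝ E).symm.norm_map _

lemma setIntegral_sq_le_of_forall_abs_le {α : Type*} [MeasurableSpace α] {ν : Measure α} {s : Set α}
    (hs : ν s < ∞) {f : α → ℝ} {R : ℝ} (hf : ∀ x ∈ s, |f x| ≤ R) :
    ∫ x in s, f x ^ 2 ∂ν ≤ R ^ 2 * ν.real s := by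
  refine (Real.le_norm_self _).trans (norm_setIntegral_le_of_norm_le_const hs fun x hx => ?_)
  rw [norm_pow]
  exact pow_le_pow_left₀ (norm_nonneg _) (hf x hx) 2

lemma energySq_le_of_bounds (κ : ℝ) {ω : Set (Euc d)} (hω : volume ω < ∞) {φ : Euc d → ℝ}
    {P Q : ℝ} (hP : ∀ x ∈ ω, ‖φ x‖ ≤ P) (hQ : ∀ x ∈ ω, ‖fderiv ℝ φ x‖ ≤ Q) :
    energySq κ ω φ ≤ (Q ^ 2 + κ ^ 2 * P ^ 2) * volume.real ω := by
  have hgrad : gradSq ω φ ≤ Q ^ 2 * volume.real ω :=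
    setIntegral_sq_le_of_forall_abs_le hω fun x hx => by
      simpa only [abs_norm, norm_gradient] using hQ x hx
  have hsq : sqIntg ω φ ≤ P ^ 2 * volume.real ω := setIntegral_sq_le_of_forall_abs_le hω hP
  calc energySq κ ω φ ≤ Q ^ 2 * volume.real ω + κ ^ 2 * (P ^ 2 * volume.real ω) := by
        unfold energySq
        gcongr
    _ = (Q ^ 2 + κ ^ 2 * P ^ 2) * volume.real ω := by ring

lemma inradius_nonneg (s : Set (Euc d)) : 0 ≤ inradius s :=
  Real.sSup_nonneg' ⟨0, ⟨0, by simp⟩, le_rfl⟩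

lemma inradius_mul_norm_fderiv_coord_le_one (B : AffineBasis (Fin (d + 1)) ℝ (Euc d))
    (i : Fin (d + 1)) (x : Euc d) : inradius (simT B) * ‖fderiv ℝ (B.coord i) x‖ ≤ 1 := by
  let f : Euc d →ᴬ[ℝ] ℝ := ⟨B.coord i, continuous_barycentric_coord B i⟩
  have hfderiv : fderiv ℝ (B.coord i) x = f.contLinear := f.fderiv
  rw [hfderiv]
  obtain hzero | hpos := (norm_nonneg f.contLinear).eq_or_lt
  · simp [← hzero]
  rw [← le_div_iff₀ hpos]
  refine csSup_le ⟨0, 0, by simp⟩ ?_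
  rintro r ⟨c, hc⟩
  obtain hr | hr := le_or_gt r 0
  · exact hr.trans (by positivity)
  rw [le_div_iff₀ hpos]
  refine mul_norm_contLinear_le_of_forall_mem_ball (c := c) hr fun y hy => ?_
  rw [← dist_eq_norm]
  exact Real.dist_le_of_mem_Icc_01 (coord_mem_Icc B (hc hy) i)
    (coord_mem_Icc B (hc (mem_ball_self hr)) i)

lemma diam_simT_pos (hd : 1 ≤ d) (B : AffineBasis (Fin (d + 1)) ℝ (Euc d)) :
    0 < diam (simT B) := by
  have hne : B 0 ≠ B (Fin.last d) := B.ind.injective.ne (by simp [Fin.ext_iff]; omega)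
  have hmem (i : Fin (d + 1)) : B i ∈ simT B := subset_convexHull ℝ _ (mem_range_self i)
  exact (dist_pos.2 hne).trans_le <|
    dist_le_diam_of_mem (isCompact_convexHull_range B).isBounded (hmem 0) (hmem (Fin.last d))

lemma norm_fderiv_coord_le (hd : 1 ≤ d) {μ : ℝ} (B : AffineBasis (Fin (d + 1)) ℝ (Euc d))
    (hμ : diam (simT B) ≤ μ * inradius (simT B)) (i : Fin (d + 1)) (x : Euc d) :
    ‖fderiv ℝ (B.coord i) x‖ ≤ |μ| * (diam (simT B))⁻¹ := by
  rw [← div_eq_mul_inv, le_div_iff₀' (diam_simT_pos hd B)]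
  calc diam (simT B) * ‖fderiv ℝ (B.coord i) x‖
      ≤ |μ| * inradius (simT B) * ‖fderiv ℝ (B.coord i) x‖ := by
        gcongr
        exact hμ.trans (mul_le_mul_of_nonneg_right (le_abs_self μ) (inradius_nonneg _))
    _ = |μ| * (inradius (simT B) * ‖fderiv ℝ (B.coord i) x‖) := mul_assoc _ _ _
    _ ≤ |μ| := mul_le_of_le_one_right (abs_nonneg μ) (inradius_mul_norm_fderiv_coord_le_one B i x)

lemma sqrt_energySq_nodalInterpolant_mul_bubble_le (hd : 1 ≤ d) {μ κ : ℝ} (hκ : 0 ≤ κ)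
    (B : AffineBasis (Fin (d + 1)) ℝ (Euc d)) (hμ : diam (simT B) ≤ μ * inradius (simT B))
    (a : Fin (d + 1) → ℝ) :
    √(energySq κ (simT B) fun x => nodalInterpolant B a x * bubble B x) ≤
      (∑ i, ‖a i‖) * ((d + 2) * |μ| + 1) * max (diam (simT B))⁻¹ κ * √(volume.real (simT B)) := by
  set S := ∑ i, ‖a i‖
  set M := max (diam (simT B))⁻¹ κ
  have _ : 0 ≤ S := Finset.sum_nonneg fun _ _ => norm_nonneg _
  have _ : 0 ≤ M := hκ.trans (le_max_right _ _)
  have hcoord (i : Fin (d + 1)) (x : Euc d) : ‖fderiv ℝ (B.coord i) x‖ ≤ |μ| * M :=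
    (norm_fderiv_coord_le hd B hμ i x).trans (by gcongr; exact le_max_left _ _)
  have hderiv : ∀ x ∈ simT B, ‖fderiv ℝ (fun x => nodalInterpolant B a x * bubble B x) x‖ ≤
      S * ((d + 2) * (|μ| * M)) := fun x hx => by
    refine (norm_fderiv_nodalInterpolant_mul_bubble_le B a hx fun i => hcoord i x).trans_eq ?_
    rw [Fintype.card_fin]
    push_cast
    ring
  have henergy := energySq_le_of_bounds κ (ω := simT B)
    (isCompact_convexHull_range B).measure_lt_top
    (fun x hx => norm_nodalInterpolant_mul_bubble_le B a hx) hderiv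
  refine Real.sqrt_le_iff.2 ⟨by positivity, henergy.trans ?_⟩
  rw [mul_pow _ √_, Real.sq_sqrt measureReal_nonneg]
  gcongr
  calc (S * ((d + 2) * (|μ| * M))) ^ 2 + κ ^ 2 * S ^ 2
      ≤ (S * ((d + 2) * (|μ| * M))) ^ 2 + M ^ 2 * S ^ 2 := by
        gcongr
        exact le_max_right _ _
    _ = (S * ((d + 2) * |μ|) * M) ^ 2 + (S * M) ^ 2 := by ring
    _ ≤ (S * ((d + 2) * |μ|) * M + S * M) ^ 2 :=
        pow_add_pow_le (by positivity) (by positivity) two_ne_zero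
    _ = (S * ((d + 2) * |μ| + 1) * M) ^ 2 := by ring

lemma sqrt_energySq_dualWeight_mul_bubble_le (hd : 1 ≤ d) {μ κ : ℝ} (hκ : 0 ≤ κ)
    (B : AffineBasis (Fin (d + 1)) ℝ (Euc d)) (hμ : diam (simT B) ≤ μ * inradius (simT B))
    (z : Fin (d + 1)) :
    √(energySq κ (simT B) fun x => dualWeight volume B z x * bubble B x) ≤
      (∑ i, ‖(bubbleMassMatrix volume B)⁻¹ z i‖) * ((d + 2) * |μ| + 1) *
        volume.real (simT B) ^ (-(1 / 2 : ℝ)) * max (diam (simT B))⁻¹ κ := by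
  have hV : 0 < volume.real (simT B) := measureReal_convexHull_range_pos volume B
  have hpow : (volume.real (simT B))⁻¹ * √(volume.real (simT B)) =
      volume.real (simT B) ^ (-(1 / 2 : ℝ)) := by
    rw [Real.sqrt_eq_rpow, ← Real.rpow_neg_one, ← Real.rpow_add hV]
    norm_num
  have hsum : ∑ i, ‖((volume.real (simT B))⁻¹ • (bubbleMassMatrix volume B)⁻¹ z) i‖ =
      (volume.real (simT B))⁻¹ * ∑ i, ‖(bubbleMassMatrix volume B)⁻¹ z i‖ := by
    simp only [Pi.smul_apply, norm_smul, ← Finset.mul_sum, norm_inv, Real.norm_of_nonneg hV.le]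
  have hbound := sqrt_energySq_nodalInterpolant_mul_bubble_le hd hκ B hμ
    ((volume.real (simT B))⁻¹ • (bubbleMassMatrix volume B)⁻¹ z)
  rw [hsum] at hbound
  refine hbound.trans_eq ?_
  rw [← hpow]
  ring

end Energy

/-- the element dual basis on a general simplex: bi-orthogonality and
robust energy bound. For every nondegenerate `d`-simplex `T` (given by an affine basis,
i.e. its vertices) with shape parameter `diam T / inradius T ≤ μ` there are affine
functions `ψ_z` such that `φ*_z := ψ_z · b_T` (with `b_T = Π_y λ_y` the element bubble)
satisfies `∫_T φ*_z λ_y = δ_{zy}` and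
`‖φ*_z‖_{E,T} ≤ C |T|^{-1/2} max{h_T⁻¹, κ}` with `C = C(d, μ)` independent of `κ`. -/
theorem element_dual_basis_robust (d : ℕ) (hd : 1 ≤ d) (μ : ℝ) :
    ∃ C : ℝ, 0 < C ∧ ∀ κ : ℝ, 0 < κ →
      ∀ B : AffineBasis (Fin (d + 1)) ℝ (Euc d),
        Metric.diam (simT B) ≤ μ * inradius (simT B) →
        ∃ ψ : Fin (d + 1) → (Euc d →ᵃ[ℝ] ℝ), ∀ z : Fin (d + 1),
          (∀ y : Fin (d + 1),
            (∫ x in simT B, (ψ z x * ∏ w, B.coord w x) * B.coord y x)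
              = if z = y then 1 else 0) ∧
          Real.sqrt (energySq κ (simT B) (fun x => ψ z x * ∏ w, B.coord w x))
            ≤ C * (volume (simT B)).toReal ^ (-(1 / 2 : ℝ))
                * max (Metric.diam (simT B))⁻¹ κ := by
  obtain ⟨B₀⟩ : Nonempty (AffineBasis (Fin (d + 1)) ℝ (Euc d)) :=
    AffineBasis.exists_affineBasis_of_finiteDimensional (by simp)
  set A := ∑ z, ∑ i, ‖(bubbleMassMatrix volume B₀)⁻¹ z i‖
  refine ⟨(A + 1) * ((d + 2) * |μ| + 1), by positivity, fun κ hκ B hB =>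
    ⟨dualWeight volume B, fun z =>
      ⟨setIntegral_dualWeight_mul_bubble_mul_coord volume B z, ?_⟩⟩⟩
  have hrow : ∑ i, ‖(bubbleMassMatrix volume B)⁻¹ z i‖ ≤ A := by
    rw [bubbleMassMatrix_eq volume B₀ B]
    exact Finset.single_le_sum (f := fun z => ∑ i, ‖(bubbleMassMatrix volume B₀)⁻¹ z i‖)
      (fun _ _ => by positivity) (Finset.mem_univ z)
  refine (sqrt_energySq_dualWeight_mul_bubble_le hd hκ.le B hB z).trans ?_
  rw [measureReal_def]
  gcongr
  linarith
end
end

section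
/- Let d ≥ 1, κ > 0, let ω ⊂ ℝ^d be a bounded open set, and let T ⊆ ω be a nondegenerate d-simplex with barycentric coordinate λ (associated with one of its vertices). Assume the Friedrichs inequality on ω with constant C_F: for every φ ∈ T(ω), ‖φ‖_{L²(ω)} ≤ C_F · diam(ω) · ‖∇φ‖_{L²(ω)}. Then for every φ ∈ T(ω): ∫_T λ φ ≤ |T|^{1/2} · min{κ^{−1}, C_F diam(ω)} · ‖φ‖_{E,ω}. -/
open MeasureTheory Metric Set
open scoped ENNReal RealInnerProductSpace NNReal Classical

noncomputable section

/-!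
Cauchy–Schwarz on `T` bounds `∫_T λ φ` by `|T|^{1/2} ‖φ‖_{L²(ω)}`, because `0 ≤ λ ≤ 1` on `T`.
Then `‖φ‖_{L²(ω)}` is controlled by the energy norm in two ways: `κ ‖φ‖_{L²(ω)} ≤ ‖φ‖_{E,ω}`
reads off the zeroth-order part, and the Friedrichs inequality goes through
`‖∇φ‖_{L²(ω)} ≤ ‖φ‖_{E,ω}`. The better of the two gives the minimum.
-/

section CauchySchwarz

variable {α : Type*} [MeasurableSpace α] {μ : Measure α} {f g : α → ℝ}

theorem integral_mul_le_sqrt_integral_sq_mul_sqrt_integral_sq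
    (hf : MemLp f 2 μ) (hg : MemLp g 2 μ) :
    ∫ x, f x * g x ∂μ ≤ √(∫ x, f x ^ 2 ∂μ) * √(∫ x, g x ^ 2 ∂μ) := by
  have two_eq : (2 : ℝ≥0∞) = ENNReal.ofReal 2 := by norm_num
  have holder := integral_mul_norm_le_Lp_mul_Lq Real.HolderConjugate.two_two
    (two_eq ▸ hf) (two_eq ▸ hg)
  calc ∫ x, f x * g x ∂μ
      ≤ ‖∫ x, f x * g x ∂μ‖ := Real.le_norm_self _
    _ ≤ ∫ x, ‖f x * g x‖ ∂μ := norm_integral_le_integral_norm _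
    _ ≤ √(∫ x, f x ^ 2 ∂μ) * √(∫ x, g x ^ 2 ∂μ) := by
      simpa [Real.sqrt_eq_rpow] using holder

theorem integral_mul_le_sqrt_measureReal_univ_mul_sqrt_integral_sq [IsFiniteMeasure μ]
    (hf : AEStronglyMeasurable f μ) (hf_le : ∀ᵐ x ∂μ, |f x| ≤ 1) (hg : MemLp g 2 μ) :
    ∫ x, f x * g x ∂μ ≤ √(μ.real univ) * √(∫ x, g x ^ 2 ∂μ) := by
  have hf_memLp : MemLp f 2 μ := .of_bound hf 1 hf_le
  have integral_sq_le : ∫ x, f x ^ 2 ∂μ ≤ μ.real univ := by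
    calc ∫ x, f x ^ 2 ∂μ
        ≤ ∫ _, 1 ∂μ := integral_mono_ae hf_memLp.integrable_sq (integrable_const 1) <|
          hf_le.mono fun x hx ↦ (sq_le_one_iff_abs_le_one (f x)).2 hx
      _ = μ.real univ := by simp
  grw [integral_mul_le_sqrt_integral_sq_mul_sqrt_integral_sq hf_memLp hg, integral_sq_le]

end CauchySchwarz

theorem le_min_inv_mul_sqrt_sq_add_sq {a g κ C : ℝ} (hκ : 0 < κ) (ha : 0 ≤ a) (hg : 0 ≤ g)
    (hag : a ≤ C * g) : a ≤ min κ⁻¹ C * √(g ^ 2 + κ ^ 2 * a ^ 2) := by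
  rw [min_mul_of_nonneg _ _ (Real.sqrt_nonneg _)]
  refine le_min ?_ ?_
  · rw [le_inv_mul_iff₀ hκ]
    exact Real.le_sqrt_of_sq_le (by nlinarith [sq_nonneg g])
  · rcases le_or_gt 0 C with hC | hC
    · have hg_le : g ≤ √(g ^ 2 + κ ^ 2 * a ^ 2) :=
        Real.le_sqrt_of_sq_le (le_add_of_nonneg_right (by positivity))
      exact hag.trans (mul_le_mul_of_nonneg_left hg_le hC)
    · obtain rfl : g = 0 := by nlinarith
      obtain rfl : a = 0 := by linarith
      simp

theorem coord_mem_Icc_of_mem_convexHull {𝕜 ι E : Type*} [Field 𝕜] [LinearOrder 𝕜]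
    [IsStrictOrderedRing 𝕜] [AddCommGroup E] [Module 𝕜 E] (B : AffineBasis ι 𝕜 E) (i : ι) {x : E}
    (hx : x ∈ convexHull 𝕜 (range B)) : B.coord i x ∈ Icc (0 : 𝕜) 1 := by
  have range_subset : range B ⊆ B.coord i ⁻¹' Icc (0 : 𝕜) 1 := by
    rintro _ ⟨j, rfl⟩
    rw [mem_preimage, B.coord_apply]
    split_ifs <;> simp
  exact convexHull_min range_subset ((convex_Icc 0 1).affine_preimage (B.coord i)) hx

section TestFunctions

variable {d : ℕ} {ω : Set (Euc d)} {φ : Euc d → ℝ}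

theorem isCompact_simT (B : AffineBasis (Fin (d + 1)) ℝ (Euc d)) : IsCompact (simT B) :=
  (finite_range B).isCompact_convexHull ℝ

theorem ae_restrict_simT_abs_coord_le_one (B : AffineBasis (Fin (d + 1)) ℝ (Euc d))
    (z : Fin (d + 1)) : ∀ᵐ x ∂volume.restrict (simT B), |B.coord z x| ≤ 1 := by
  refine ae_restrict_of_forall_mem (isCompact_simT B).measurableSet fun x hx ↦ ?_
  obtain ⟨h_nonneg, h_le⟩ := coord_mem_Icc_of_mem_convexHull B z hx
  rwa [abs_of_nonneg h_nonneg]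

theorem IsTest.continuous (hφ : IsTest ω φ) : Continuous φ :=
  hφ.1.choose_spec.continuous

theorem IsTest.integrableOn_sq (hφ : IsTest ω φ) (hω : Bornology.IsBounded ω) :
    IntegrableOn (fun x ↦ φ x ^ 2) ω :=
  ((hφ.continuous.pow 2).continuousOn.integrableOn_compact hω.isCompact_closure).mono_set
    subset_closure

theorem sqrt_sqIntg_le_min_mul_sqrt_energySq {κ C : ℝ} (hκ : 0 < κ)
    (hFried : √(sqIntg ω φ) ≤ C * √(gradSq ω φ)) :
    √(sqIntg ω φ) ≤ min κ⁻¹ C * √(energySq κ ω φ) := by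
  have sqIntg_nonneg : 0 ≤ sqIntg ω φ := integral_nonneg fun x ↦ sq_nonneg _
  have gradSq_nonneg : 0 ≤ gradSq ω φ := integral_nonneg fun x ↦ sq_nonneg _
  simpa only [energySq, Real.sq_sqrt sqIntg_nonneg, Real.sq_sqrt gradSq_nonneg] using
    le_min_inv_mul_sqrt_sq_add_sq hκ (Real.sqrt_nonneg _) (Real.sqrt_nonneg _) hFried

theorem setIntegral_mul_le_sqrt_measureReal_mul_sqrt_sqIntg {T : Set (Euc d)} {w : Euc d → ℝ}
    (hTω : T ⊆ ω) (hT : volume T ≠ ∞) (hw : AEStronglyMeasurable w (volume.restrict T))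
    (hw_le : ∀ᵐ x ∂volume.restrict T, |w x| ≤ 1) (hφ : MemLp φ 2 (volume.restrict ω)) :
    ∫ x in T, w x * φ x ≤ √(volume.real T) * √(sqIntg ω φ) := by
  have : IsFiniteMeasure (volume.restrict T) := isFiniteMeasure_restrict.2 hT
  have sq_le_sqIntg : ∫ x in T, φ x ^ 2 ≤ sqIntg ω φ :=
    setIntegral_mono_set hφ.integrable_sq (ae_of_all _ fun x ↦ sq_nonneg _) hTω.eventuallyLE
  calc ∫ x in T, w x * φ x
      ≤ √((volume.restrict T).real univ) * √(∫ x in T, φ x ^ 2) :=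
        integral_mul_le_sqrt_measureReal_univ_mul_sqrt_integral_sq hw hw_le
          (hφ.mono_measure (Measure.restrict_mono_set volume hTω))
    _ ≤ √(volume.real T) * √(sqIntg ω φ) := by
        rw [measureReal_restrict_apply_univ]
        gcongr

theorem nodal_functional_robust_bound_general {κ C : ℝ} (hκ : 0 < κ) {T : Set (Euc d)}
    (hTω : T ⊆ ω) (hT : volume T ≠ ∞) {w : Euc d → ℝ}
    (hw : AEStronglyMeasurable w (volume.restrict T))
    (hw_le : ∀ᵐ x ∂volume.restrict T, |w x| ≤ 1)
    (hφ : IsTest ω φ) (hφ_sq : IntegrableOn (fun x ↦ φ x ^ 2) ω)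
    (hFried : √(sqIntg ω φ) ≤ C * √(gradSq ω φ)) :
    ∫ x in T, w x * φ x ≤ √(volume.real T) * min κ⁻¹ C * √(energySq κ ω φ) := by
  have hφ_memLp : MemLp φ 2 (volume.restrict ω) :=
    (memLp_two_iff_integrable_sq hφ.continuous.aestronglyMeasurable).2 hφ_sq
  calc ∫ x in T, w x * φ x
      ≤ √(volume.real T) * √(sqIntg ω φ) :=
        setIntegral_mul_le_sqrt_measureReal_mul_sqrt_sqIntg hTω hT hw hw_le hφ_memLp
    _ ≤ √(volume.real T) * (min κ⁻¹ C * √(energySq κ ω φ)) := by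
        grw [sqrt_sqIntg_le_min_mul_sqrt_energySq hκ hFried]
    _ = √(volume.real T) * min κ⁻¹ C * √(energySq κ ω φ) := by rw [mul_assoc]

end TestFunctions

/-- robust bound for testing a barycentric coordinate, used for the
local stability of the bi-orthogonal system. If the Friedrichs inequality holds on `ω`
with constant `C_F`, `T ⊆ ω` is a nondegenerate simplex and `λ = B.coord z` one of its
barycentric coordinates, then for every `φ ∈ T(ω)`:
`∫_T λ φ ≤ |T|^{1/2} min{κ⁻¹, C_F diam ω} ‖φ‖_{E,ω}`. -/
theorem nodal_functional_robust_bound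
    (d : ℕ) (hd : 1 ≤ d) (κ : ℝ) (hκ : 0 < κ)
    (ω : Set (Euc d)) (hω : IsOpen ω) (hbdd : Bornology.IsBounded ω)
    (B : AffineBasis (Fin (d + 1)) ℝ (Euc d)) (hTω : simT B ⊆ ω)
    (z : Fin (d + 1)) (CF : ℝ)
    (hFried : ∀ φ : Euc d → ℝ, IsTest ω φ →
      Real.sqrt (sqIntg ω φ) ≤ CF * Metric.diam ω * Real.sqrt (gradSq ω φ)) :
    ∀ φ : Euc d → ℝ, IsTest ω φ →
      (∫ x in simT B, B.coord z x * φ x)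
        ≤ Real.sqrt (volume (simT B)).toReal * min κ⁻¹ (CF * Metric.diam ω)
            * Real.sqrt (energySq κ ω φ) := by
  intro φ hφ
  exact nodal_functional_robust_bound_general hκ hTω (isCompact_simT B).measure_ne_top
    (continuous_barycentric_coord B z).aestronglyMeasurable (ae_restrict_simT_abs_coord_le_one B z)
    hφ (hφ.integrableOn_sq hbdd) (hFried φ hφ)
end
end
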